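/- arXiv:1901.01993 — 3 statements merged into one kernel-verified Lean document; each statement's English description precedes it below -/
import Mathlib

section
/- (Berkovich–Grizzell) Let L > 0 be an integer and let y > 1 be an odd integer. In the ring of formal power series over ℚ in one variable q, write a(L,y,n) for the coefficients of (∏_{j=0}^{L−1} (1 − q^{1+j(2y+2)})(1 − q^{y+2+j(2y+2)})(1 − q^{2y+j(2y+2)}))⁻¹ − (∏_{j=0}^{L−1} (1 − q^{2+j(2y+2)})(1 − q^{y+j(2y+2)})(1 − q^{2y+1+j(2y+2)}))⁻¹ = Σ_{n≥0} a(L,y,n) q^n. Then a(L,y,n) ≥ 0 for all n ≥ 0. -/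
open PowerSeries

namespace BG
variable {K : Type*} [Field K]

/-- Abstract positivity context. -/
structure Ctx (P : Subsemiring K) (q r : K) : Prop where
  hq : q ∈ P
  hr : r ∈ P
  hD : ∀ a b : ℕ, 0 < a → (1 - q ^ a * r ^ b)⁻¹ ∈ P
  hne : ∀ a b : ℕ, 0 < a → 1 - q ^ a * r ^ b ≠ 0
  hS : (1 - r) / (1 - q ^ 2) ∈ P
  hq2 : 1 - q ^ 2 ≠ 0

lemma Ctx.m {P : Subsemiring K} {q r : K} (c : Ctx P q r) (a b : ℕ) : q ^ a * r ^ b ∈ P :=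
  mul_mem (pow_mem c.hq a) (pow_mem c.hr b)

lemma two (P : Subsemiring K) {u v : K} (hu : u ∈ P) (hu1 : 1 - u ≠ 0) (hv1 : 1 - v ≠ 0)
    (hU : (1 - u)⁻¹ ∈ P) (hV : (1 - v)⁻¹ ∈ P) :
    (1 - u)⁻¹ * (1 - v)⁻¹ * (1 - u * v) ∈ P := by
  have : (1 - u)⁻¹ * (1 - v)⁻¹ * (1 - u * v) = (1 - v)⁻¹ + u * (1 - u)⁻¹ := by
    field_simp; ring
  rw [this]
  exact add_mem hV (mul_mem hu hU)

lemma three (P : Subsemiring K) {u v w : K} (hu : u ∈ P) (hv : v ∈ P)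
    (hu1 : 1 - u ≠ 0) (hv1 : 1 - v ≠ 0) (hw1 : 1 - w ≠ 0)
    (hU : (1 - u)⁻¹ ∈ P) (hV : (1 - v)⁻¹ ∈ P) (hW : (1 - w)⁻¹ ∈ P) :
    (1 - u)⁻¹ * (1 - v)⁻¹ * (1 - w)⁻¹ * (1 - u * v * w) ∈ P := by
  have : (1 - u)⁻¹ * (1 - v)⁻¹ * (1 - w)⁻¹ * (1 - u * v * w) =
     (1 - v)⁻¹ * (1 - w)⁻¹ + u * (1 - u)⁻¹ * (1 - w)⁻¹ + u * v * (1 - u)⁻¹ * (1 - v)⁻¹ := by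
    field_simp; ring
  rw [this]
  exact add_mem (add_mem (mul_mem hV hW) (mul_mem (mul_mem hu hU) hW))
    (mul_mem (mul_mem (mul_mem hu hv) hU) hV)

/-- (J) -/
lemma J {P : Subsemiring K} {q r : K} (c : Ctx P q r) :
    (1 - q ^ 3 * r ^ 2)⁻¹ * (1 - q ^ 6 * r ^ 2)⁻¹ *
      ((1 - q ^ 2 * r ^ 2)⁻¹ * (1 - q ^ 14 * r ^ 6)⁻¹ -
        (1 - q ^ 20 * r ^ 8)⁻¹ * (1 - q ^ 11 * r ^ 6)⁻¹) ∈ P := by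
  have h1 := c.hne 3 2 (by norm_num)
  have h2 := c.hne 6 2 (by norm_num)
  have h3 := c.hne 2 2 (by norm_num)
  have h4 := c.hne 14 6 (by norm_num)
  have h5 := c.hne 20 8 (by norm_num)
  have h6 := c.hne 11 6 (by norm_num)
  have k1 := c.hD 3 2 (by norm_num)
  have k2 := c.hD 6 2 (by norm_num)
  have k3 := c.hD 2 2 (by norm_num)
  have k4 := c.hD 14 6 (by norm_num)
  have k5 := c.hD 20 8 (by norm_num)
  have k6 := c.hD 11 6 (by norm_num)
  have e1 : (1 - q ^ 14 * r ^ 6)⁻¹ - (1 - q ^ 20 * r ^ 8)⁻¹ =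
      (1 - q ^ 6 * r ^ 2) * (q ^ 14 * r ^ 6 * (1 - q ^ 14 * r ^ 6)⁻¹ * (1 - q ^ 20 * r ^ 8)⁻¹) := by
    field_simp; ring
  have e2 : (1 - q ^ 2 * r ^ 2)⁻¹ - (1 - q ^ 11 * r ^ 6)⁻¹ =
      (1 - (q ^ 3 * r ^ 2) * (q ^ 6 * r ^ 2)) *
        (q ^ 2 * r ^ 2 * (1 - q ^ 2 * r ^ 2)⁻¹ * (1 - q ^ 11 * r ^ 6)⁻¹) := by
    field_simp; ring
  have t := two P (c.m 3 2) h1 h2 k1 k2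
  have e3 : (1 - q ^ 6 * r ^ 2)⁻¹ * (1 - q ^ 6 * r ^ 2) = 1 := inv_mul_cancel₀ h2
  generalize (1 - q ^ 3 * r ^ 2)⁻¹ = A at *
  generalize (1 - q ^ 6 * r ^ 2)⁻¹ = B at *
  generalize (1 - q ^ 2 * r ^ 2)⁻¹ = a at *
  generalize (1 - q ^ 14 * r ^ 6)⁻¹ = d at *
  generalize (1 - q ^ 20 * r ^ 8)⁻¹ = e at *
  generalize (1 - q ^ 11 * r ^ 6)⁻¹ = g at *
  have : A * B * (a * d - e * g) = A * a * (q ^ 14 * r ^ 6 * d * e) +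
     e * (A * B * (1 - q ^ 3 * r ^ 2 * (q ^ 6 * r ^ 2))) * (q ^ 2 * r ^ 2 * a * g) := by
    linear_combination A * B * a * e1 + A * B * e * e2 + A * a * (q ^ 14 * r ^ 6 * d * e) * e3
  rw [this]
  exact add_mem (mul_mem (mul_mem k1 k3) (mul_mem (mul_mem (c.m _ _) k4) k5))
    (mul_mem (mul_mem k5 t) (mul_mem (mul_mem (c.m _ _) k3) k6))

/-- (J2) -/
lemma J2 {P : Subsemiring K} {q r : K} (c : Ctx P q r) :
    (1 - q ^ 6 * r ^ 4)⁻¹ * (1 - q ^ 6 * r ^ 2)⁻¹ *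
      ((1 - q ^ 4 * r ^ 4)⁻¹ * (1 - q ^ 14 * r ^ 6)⁻¹ -
        (1 - q ^ 20 * r ^ 8)⁻¹ * (1 - q ^ 22 * r ^ 12)⁻¹) ∈ P := by
  have h1 := c.hne 6 4 (by norm_num)
  have h2 := c.hne 6 2 (by norm_num)
  have h3 := c.hne 4 4 (by norm_num)
  have h4 := c.hne 14 6 (by norm_num)
  have h5 := c.hne 20 8 (by norm_num)
  have h6 := c.hne 22 12 (by norm_num)
  have k1 := c.hD 6 4 (by norm_num)
  have k2 := c.hD 6 2 (by norm_num)
  have k3 := c.hD 4 4 (by norm_num)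
  have k4 := c.hD 14 6 (by norm_num)
  have k5 := c.hD 20 8 (by norm_num)
  have k6 := c.hD 22 12 (by norm_num)
  have e1 : (1 - q ^ 14 * r ^ 6)⁻¹ - (1 - q ^ 20 * r ^ 8)⁻¹ =
      (1 - q ^ 6 * r ^ 2) * (q ^ 14 * r ^ 6 * (1 - q ^ 14 * r ^ 6)⁻¹ * (1 - q ^ 20 * r ^ 8)⁻¹) := by
    field_simp; ring
  have e2 : (1 - q ^ 4 * r ^ 4)⁻¹ - (1 - q ^ 22 * r ^ 12)⁻¹ =
      (1 - (q ^ 6 * r ^ 4) * (q ^ 6 * r ^ 2) ^ 2) *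
        (q ^ 4 * r ^ 4 * (1 - q ^ 4 * r ^ 4)⁻¹ * (1 - q ^ 22 * r ^ 12)⁻¹) := by
    field_simp; ring
  have t : (1 - q ^ 6 * r ^ 4)⁻¹ * (1 - q ^ 6 * r ^ 2)⁻¹ *
      (1 - (q ^ 6 * r ^ 4) * (q ^ 6 * r ^ 2) ^ 2) ∈ P := by
    have : (1 - q ^ 6 * r ^ 4)⁻¹ * (1 - q ^ 6 * r ^ 2)⁻¹ *
      (1 - (q ^ 6 * r ^ 4) * (q ^ 6 * r ^ 2) ^ 2) = (1 - q ^ 6 * r ^ 2)⁻¹ +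
        q ^ 6 * r ^ 4 * (1 + q ^ 6 * r ^ 2) * (1 - q ^ 6 * r ^ 4)⁻¹ := by
      field_simp; ring
    rw [this]
    exact add_mem k2 (mul_mem (mul_mem (c.m _ _) (add_mem (one_mem _) (c.m _ _))) k1)
  have e3 : (1 - q ^ 6 * r ^ 2)⁻¹ * (1 - q ^ 6 * r ^ 2) = 1 := inv_mul_cancel₀ h2
  generalize (1 - q ^ 6 * r ^ 4)⁻¹ = A at *
  generalize (1 - q ^ 6 * r ^ 2)⁻¹ = B at *
  generalize (1 - q ^ 4 * r ^ 4)⁻¹ = a at *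
  generalize (1 - q ^ 14 * r ^ 6)⁻¹ = d at *
  generalize (1 - q ^ 20 * r ^ 8)⁻¹ = e at *
  generalize (1 - q ^ 22 * r ^ 12)⁻¹ = g at *
  have : A * B * (a * d - e * g) = A * a * (q ^ 14 * r ^ 6 * d * e) +
     e * (A * B * (1 - q ^ 6 * r ^ 4 * (q ^ 6 * r ^ 2) ^ 2)) * (q ^ 4 * r ^ 4 * a * g) := by
    linear_combination A * B * a * e1 + A * B * e * e2 + A * a * (q ^ 14 * r ^ 6 * d * e) * e3
  rw [this]
  exact add_mem (mul_mem (mul_mem k1 k3) (mul_mem (mul_mem (c.m _ _) k4) k5))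
    (mul_mem (mul_mem k5 t) (mul_mem (mul_mem (c.m _ _) k3) k6))

/-- G part of (β). -/
lemma Gpart {P : Subsemiring K} {q r : K} (c : Ctx P q r) :
    (1 - q ^ 3 * r ^ 2)⁻¹ * (1 - q ^ 6 * r ^ 2)⁻¹ *
      ((1 - q ^ 2 * r ^ 2)⁻¹ * (1 - q ^ 14 * r ^ 6)⁻¹ * (q ^ 8 * r ^ 4 + q ^ 14 * r ^ 6) -
        (1 - q ^ 20 * r ^ 8)⁻¹ * (1 - q ^ 11 * r ^ 6)⁻¹ * (q ^ 17 * r ^ 8 + q ^ 20 * r ^ 8)) ∈ P := by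
  have h2 := c.hne 6 2 (by norm_num)
  have k1 := c.hD 3 2 (by norm_num)
  have k2 := c.hD 6 2 (by norm_num)
  have k5 := c.hD 20 8 (by norm_num)
  have k6 := c.hD 11 6 (by norm_num)
  have t := two P (c.m 3 2) (c.hne 3 2 (by norm_num)) h2 k1 k2
  have j := J c
  have e3 : (1 - q ^ 6 * r ^ 2)⁻¹ * (1 - q ^ 6 * r ^ 2) = 1 := inv_mul_cancel₀ h2
  generalize (1 - q ^ 3 * r ^ 2)⁻¹ = A at *
  generalize (1 - q ^ 6 * r ^ 2)⁻¹ = B at *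
  generalize (1 - q ^ 2 * r ^ 2)⁻¹ = a at *
  generalize (1 - q ^ 14 * r ^ 6)⁻¹ = d at *
  generalize (1 - q ^ 20 * r ^ 8)⁻¹ = e at *
  generalize (1 - q ^ 11 * r ^ 6)⁻¹ = g at *
  have : A * B * (a * d * (q ^ 8 * r ^ 4 + q ^ 14 * r ^ 6) - e * g * (q ^ 17 * r ^ 8 + q ^ 20 * r ^ 8))
     = (q ^ 8 * r ^ 4 + q ^ 14 * r ^ 6) * (A * B * (a * d - e * g)) +
       q ^ 8 * r ^ 4 * (e * g) * (A * B * (1 - q ^ 3 * r ^ 2 * (q ^ 6 * r ^ 2))) +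
       q ^ 14 * r ^ 6 * (e * g) * A := by
    linear_combination q ^ 14 * r ^ 6 * (e * g) * A * e3
  rw [this]
  exact add_mem (add_mem (mul_mem (add_mem (c.m _ _) (c.m _ _)) j)
    (mul_mem (mul_mem (c.m _ _) (mul_mem k5 k6)) t))
    (mul_mem (mul_mem (c.m _ _) (mul_mem k5 k6)) k1)

/-- other part of (β). -/
lemma Opart {P : Subsemiring K} {q r : K} (c : Ctx P q r) :
    (1 - q ^ 6 * r ^ 4)⁻¹ * (1 - q ^ 6 * r ^ 2)⁻¹ * (1 - q ^ 5 * r ^ 2)⁻¹ *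
      ((1 - q ^ 2 * r ^ 2)⁻¹ * (1 - q ^ 14 * r ^ 6)⁻¹ *
         (q ^ 10 * r ^ 4 + q ^ 11 * r ^ 4 + q ^ 4 * r ^ 2) -
        (1 + q ^ 3 * r ^ 2) * (1 - q ^ 20 * r ^ 8)⁻¹ * (1 - q ^ 11 * r ^ 6)⁻¹ *
          (q ^ 10 * r ^ 4)) ∈ P := by
  have h1 := c.hne 6 4 (by norm_num)
  have h2 := c.hne 6 2 (by norm_num)
  have h0 := c.hne 5 2 (by norm_num)
  have h3 := c.hne 4 4 (by norm_num)
  have h3' := c.hne 2 2 (by norm_num)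
  have h6 := c.hne 22 12 (by norm_num)
  have h6' := c.hne 11 6 (by norm_num)
  have k0 := c.hD 5 2 (by norm_num)
  have k1 := c.hD 6 4 (by norm_num)
  have k2 := c.hD 6 2 (by norm_num)
  have k3 := c.hD 4 4 (by norm_num)
  have k4 := c.hD 14 6 (by norm_num)
  have k5 := c.hD 20 8 (by norm_num)
  have k6 := c.hD 22 12 (by norm_num)
  have ea : (1 - q ^ 2 * r ^ 2)⁻¹ = (1 + q ^ 2 * r ^ 2) * (1 - q ^ 4 * r ^ 4)⁻¹ := by
    field_simp; ring
  have eg : (1 - q ^ 11 * r ^ 6)⁻¹ = (1 + q ^ 11 * r ^ 6) * (1 - q ^ 22 * r ^ 12)⁻¹ := by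
    field_simp; ring
  have t2 := two P (c.m 6 4) h1 h2 k1 k2
  have t3 := three P (c.m 6 4) (c.m 6 2) h1 h2 h0 k1 k2 k0
  have j := J2 c
  rw [ea, eg]
  generalize (1 - q ^ 6 * r ^ 4)⁻¹ = A at *
  generalize (1 - q ^ 6 * r ^ 2)⁻¹ = B at *
  generalize (1 - q ^ 5 * r ^ 2)⁻¹ = C at *
  generalize (1 - q ^ 4 * r ^ 4)⁻¹ = a at *
  generalize (1 - q ^ 14 * r ^ 6)⁻¹ = d at *
  generalize (1 - q ^ 20 * r ^ 8)⁻¹ = e at *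
  generalize (1 - q ^ 22 * r ^ 12)⁻¹ = g at *
  have : A * B * C * ((1 + q ^ 2 * r ^ 2) * a * d *
         (q ^ 10 * r ^ 4 + q ^ 11 * r ^ 4 + q ^ 4 * r ^ 2) -
        (1 + q ^ 3 * r ^ 2) * e * ((1 + q ^ 11 * r ^ 6) * g) * (q ^ 10 * r ^ 4)) =
      (q ^ 10 * r ^ 4 + q ^ 13 * r ^ 6 + q ^ 4 * r ^ 2 + q ^ 12 * r ^ 6) * C *
        (A * B * (a * d - e * g)) +
      q ^ 4 * r ^ 2 * (e * g) * (A * B * C * (1 - q ^ 6 * r ^ 4 * (q ^ 6 * r ^ 2) * (q ^ 5 * r ^ 2))) +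
      q ^ 12 * r ^ 6 * (e * g) * C * (A * B * (1 - q ^ 6 * r ^ 4 * (q ^ 6 * r ^ 2))) +
      (q ^ 11 * r ^ 4 + q ^ 6 * r ^ 4) * (A * B * C * (a * d)) := by
    ring
  rw [this]
  have m := c.m
  have k56 := mul_mem k5 k6
  exact add_mem (add_mem (add_mem
    (mul_mem (mul_mem (add_mem (add_mem (add_mem (m _ _) (m _ _)) (m _ _)) (m _ _)) k0) j)
    (mul_mem (mul_mem (m _ _) k56) t3))
    (mul_mem (mul_mem (mul_mem (m _ _) k56) k0) t2))
    (mul_mem (add_mem (m _ _) (m _ _)) (mul_mem (mul_mem (mul_mem k1 k2) k0) (mul_mem k3 k4)))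


/-- The factor of the first product. -/
def A (q r x : K) : K := (1 - x * q) * ((1 - x * (q ^ 3 * r)) * (1 - x * (q ^ 2 * r ^ 2)))
/-- The factor of the second product. -/
def B (q r x : K) : K := (1 - x * q ^ 2) * ((1 - x * (q * r)) * (1 - x * (q ^ 3 * r ^ 2)))
/-- The correction factor. -/
def H (q r x : K) : K :=
  (1 - x * (q ^ 2 * r)) * (1 - x * (q ^ 3 * r)) / ((1 - x * q ^ 2) * (1 - x * (q ^ 3 * r ^ 2)))
/-- The modified second series. -/
def Y (q r : K) : K := ((1 - q ^ 2) * (1 - q * r) * (1 - q ^ 3 * r ^ 2) * (1 - q ^ 5 * r ^ 2) *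
  (1 - q ^ 6 * r ^ 2) * (1 - q ^ 7 * r ^ 4))⁻¹

lemma UY (q r : K) (h0 : 1 - q ≠ 0) (h1 : 1 - q ^ 2 ≠ 0) (h2 : 1 - q * r ≠ 0)
   (h3 : 1 - q ^ 3 * r ^ 2 ≠ 0) (h4 : 1 - q ^ 5 * r ^ 2 ≠ 0) (h5 : 1 - q ^ 6 * r ^ 2 ≠ 0)
   (h6 : 1 - q ^ 7 * r ^ 4 ≠ 0) (h7 : 1 - q ^ 3 * r ≠ 0) (h8 : 1 - q ^ 2 * r ^ 2 ≠ 0)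
   (h9 : 1 - q ^ 7 * r ^ 3 ≠ 0) (h10 : 1 - q ^ 6 * r ^ 4 ≠ 0) :
   (A q r 1 * A q r (q ^ 4 * r ^ 2))⁻¹ - Y q r =
    (1 - r) / (1 - q ^ 2) * ((1 - q ^ 6 * r ^ 4)⁻¹ * (1 - q ^ 6 * r ^ 2)⁻¹ * (1 - q ^ 5 * r ^ 2)⁻¹) *
     ((1 - q ^ 2 * r ^ 2)⁻¹ * (1 - q ^ 7 * r ^ 3)⁻¹ * (q + q ^ 3 * r + q ^ 4 * r + q ^ 4 * r ^ 2 +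
      q ^ 7 * r ^ 3 * (1 + q * r) * (1 + q ^ 3 * r ^ 2) * (1 - q ^ 7 * r ^ 4)⁻¹)) := by
  have eA : A q r 1 * A q r (q ^ 4 * r ^ 2) = (1 - q) * (1 - q ^ 3 * r) * (1 - q ^ 2 * r ^ 2) *
    (1 - q ^ 5 * r ^ 2) * (1 - q ^ 7 * r ^ 3) * (1 - q ^ 6 * r ^ 4) := by unfold A; ring
  rw [eA]; unfold Y
  field_simp
  ring

lemma YH (q r : K) (h1 : 1 - q ^ 2 ≠ 0) (h2 : 1 - q * r ≠ 0)
   (h3 : 1 - q ^ 3 * r ^ 2 ≠ 0) (h4 : 1 - q ^ 5 * r ^ 2 ≠ 0) (h5 : 1 - q ^ 6 * r ^ 2 ≠ 0)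
   (h6 : 1 - q ^ 7 * r ^ 4 ≠ 0) (h10 : 1 - q ^ 6 * r ^ 4 ≠ 0)
   (h11 : 1 - q ^ 10 * r ^ 4 ≠ 0) (h12 : 1 - q ^ 11 * r ^ 6 ≠ 0) :
   Y q r * H q r (q ^ 8 * r ^ 4) - Y q r =
    (1 - r) / (1 - q ^ 2) * ((1 - q ^ 6 * r ^ 4)⁻¹ * (1 - q ^ 6 * r ^ 2)⁻¹ * (1 - q ^ 5 * r ^ 2)⁻¹) *
     ((1 + q ^ 3 * r ^ 2) * (q ^ 10 * r ^ 4) * (1 - q ^ 7 * r ^ 4)⁻¹ *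
       (1 - q ^ 10 * r ^ 4)⁻¹ * (1 - q ^ 11 * r ^ 6)⁻¹) := by
  have eH : H q r (q ^ 8 * r ^ 4) - 1 = q * (1 - r) * (1 - q * r) * (q ^ 9 * r ^ 4) *
     ((1 - q ^ 10 * r ^ 4)⁻¹ * (1 - q ^ 11 * r ^ 6)⁻¹) := by
    unfold H
    have a1 : 1 - q ^ 8 * r ^ 4 * q ^ 2 = 1 - q ^ 10 * r ^ 4 := by ring
    have a2 : 1 - q ^ 8 * r ^ 4 * (q ^ 3 * r ^ 2) = 1 - q ^ 11 * r ^ 6 := by ring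
    rw [a1, a2]
    field_simp
    ring
  have : Y q r * H q r (q ^ 8 * r ^ 4) - Y q r = Y q r * (H q r (q ^ 8 * r ^ 4) - 1) := by ring
  rw [this, eH]; unfold Y
  have a3 : 1 - q ^ 6 * r ^ 4 = (1 - q ^ 3 * r ^ 2) * (1 + q ^ 3 * r ^ 2) := by ring
  have a4 : 1 + q ^ 3 * r ^ 2 ≠ 0 := by
    intro h; rw [a3, h, mul_zero] at h10; exact h10 rfl
  rw [a3]
  field_simp

lemma beta {P : Subsemiring K} {q r : K} (c : Ctx P q r) :
    (A q r 1 * A q r (q ^ 4 * r ^ 2))⁻¹ - Y q r * H q r (q ^ 8 * r ^ 4) ∈ P := by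
  have h0 : 1 - q ≠ 0 := by simpa using c.hne 1 0 (by norm_num)
  have h1 := c.hq2
  have h2 : 1 - q * r ≠ 0 := by simpa using c.hne 1 1 (by norm_num)
  have h3 := c.hne 3 2 (by norm_num)
  have h4 := c.hne 5 2 (by norm_num)
  have h5 := c.hne 6 2 (by norm_num)
  have h6 := c.hne 7 4 (by norm_num)
  have h7 : 1 - q ^ 3 * r ≠ 0 := by simpa using c.hne 3 1 (by norm_num)
  have h8 := c.hne 2 2 (by norm_num)
  have h9 := c.hne 7 3 (by norm_num)
  have h10 := c.hne 6 4 (by norm_num)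
  have h11 := c.hne 10 4 (by norm_num)
  have h12 := c.hne 11 6 (by norm_num)
  have h13 := c.hne 14 6 (by norm_num)
  have h14 := c.hne 20 8 (by norm_num)
  have e1 := UY q r h0 h1 h2 h3 h4 h5 h6 h7 h8 h9 h10
  have e2 := YH q r h1 h2 h3 h4 h5 h6 h10 h11 h12
  have ed : (1 - q ^ 7 * r ^ 3)⁻¹ = (1 + q ^ 7 * r ^ 3) * (1 - q ^ 14 * r ^ 6)⁻¹ := by
    field_simp; ring
  have ee : (1 - q ^ 10 * r ^ 4)⁻¹ = (1 + q ^ 10 * r ^ 4) * (1 - q ^ 20 * r ^ 8)⁻¹ := by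
    field_simp; ring
  have ep : (1 - q ^ 7 * r ^ 4)⁻¹ = 1 + q ^ 7 * r ^ 4 * (1 - q ^ 7 * r ^ 4)⁻¹ := by
    field_simp; ring
  have ew : (1 - q ^ 3 * r ^ 2)⁻¹ = (1 + q ^ 3 * r ^ 2) * (1 - q ^ 6 * r ^ 4)⁻¹ := by
    field_simp; ring
  have G := Gpart c
  have O := Opart c
  rw [ed] at e1
  rw [ee] at e2
  rw [ew] at G
  have kS := c.hS
  have kp := c.hD 7 4 (by norm_num)
  have kA := c.hD 6 4 (by norm_num)
  have kB := c.hD 6 2 (by norm_num)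
  have kC := c.hD 5 2 (by norm_num)
  have ka := c.hD 2 2 (by norm_num)
  have kd := c.hD 14 6 (by norm_num)
  generalize (A q r 1 * A q r (q ^ 4 * r ^ 2))⁻¹ = U at *
  generalize Y q r * H q r (q ^ 8 * r ^ 4) = Z at *
  generalize Y q r = Y0 at *
  generalize (1 - r) / (1 - q ^ 2) = S at *
  generalize (1 - q ^ 6 * r ^ 4)⁻¹ = A at *
  generalize (1 - q ^ 6 * r ^ 2)⁻¹ = B at *
  generalize (1 - q ^ 5 * r ^ 2)⁻¹ = C at *
  generalize (1 - q ^ 2 * r ^ 2)⁻¹ = a at *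
  generalize (1 - q ^ 14 * r ^ 6)⁻¹ = d at *
  generalize (1 - q ^ 20 * r ^ 8)⁻¹ = e at *
  generalize (1 - q ^ 11 * r ^ 6)⁻¹ = g at *
  generalize (1 - q ^ 7 * r ^ 4)⁻¹ = p at *
  have : U - Z = S * (A * B * C *
         (a * d * (q ^ 10 * r ^ 4 + q ^ 11 * r ^ 4 + q ^ 4 * r ^ 2) -
        (1 + q ^ 3 * r ^ 2) * e * g * (q ^ 10 * r ^ 4))) +
      S * C * p * ((1 + q ^ 3 * r ^ 2) * A * B * (a * d * (q ^ 8 * r ^ 4 + q ^ 14 * r ^ 6) -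
        e * g * (q ^ 17 * r ^ 8 + q ^ 20 * r ^ 8))) +
      S * (A * B * C) * (a * d) * ((q ^ 1 * r ^ 0 + q ^ 3 * r ^ 1 + q ^ 4 * r ^ 1 + q ^ 8 * r ^ 3 + q ^ 11 * r ^ 5)
        + (1 + q ^ 3 * r ^ 2) * p * (q ^ 7 * r ^ 3 + q ^ 15 * r ^ 7)) := by
    linear_combination e1 - e2 - S * (A * B * C) * (1 + q ^ 3 * r ^ 2) * (q ^ 10 * r ^ 4) * e * g * ep
  rw [this]
  have m := c.m
  exact add_mem (add_mem (mul_mem kS O) (mul_mem (mul_mem (mul_mem kS kC) kp) G))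
    (mul_mem (mul_mem (mul_mem kS (mul_mem (mul_mem kA kB) kC)) (mul_mem ka kd))
     (add_mem (add_mem (add_mem (add_mem (add_mem (m _ _) (m _ _)) (m _ _)) (m _ _)) (m _ _))
      (mul_mem (mul_mem (add_mem (one_mem _) (m _ _)) kp) (add_mem (m _ _) (m _ _)))))

/-- (α) -/
lemma alpha {P : Subsemiring K} {q r : K} (c : Ctx P q r) :
    Y q r - (B q r 1 * B q r (q ^ 4 * r ^ 2))⁻¹ ∈ P := by
  have h1 := c.hq2
  have h2 : 1 - q * r ≠ 0 := by simpa using c.hne 1 1 (by norm_num)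
  have h3 := c.hne 3 2 (by norm_num)
  have h4 := c.hne 5 2 (by norm_num)
  have h5 := c.hne 6 2 (by norm_num)
  have h6 := c.hne 7 4 (by norm_num)
  have h7 := c.hne 5 3 (by norm_num)
  have eB : B q r 1 * B q r (q ^ 4 * r ^ 2) = (1 - q ^ 2) * (1 - q * r) * (1 - q ^ 3 * r ^ 2) *
    (1 - q ^ 6 * r ^ 2) * (1 - q ^ 5 * r ^ 3) * (1 - q ^ 7 * r ^ 4) := by unfold B; ring
  have : Y q r - (B q r 1 * B q r (q ^ 4 * r ^ 2))⁻¹ = q ^ 5 * r ^ 2 * ((1 - r) / (1 - q ^ 2)) *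
     ((1 - q ^ 1 * r ^ 1)⁻¹ * (1 - q ^ 3 * r ^ 2)⁻¹ * (1 - q ^ 6 * r ^ 2)⁻¹ * (1 - q ^ 7 * r ^ 4)⁻¹ *
      (1 - q ^ 5 * r ^ 2)⁻¹ * (1 - q ^ 5 * r ^ 3)⁻¹) := by
    rw [eB, pow_one, pow_one]; unfold Y
    field_simp
    ring
  rw [this]
  have D := c.hD
  exact mul_mem (mul_mem (c.m _ _) c.hS) (mul_mem (mul_mem (mul_mem (mul_mem (mul_mem
    (D _ _ (by norm_num)) (D _ _ (by norm_num))) (D _ _ (by norm_num))) (D _ _ (by norm_num)))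
    (D _ _ (by norm_num))) (D _ _ (by norm_num)))

/-- L = 1 -/
lemma one_case {P : Subsemiring K} {q r : K} (c : Ctx P q r) :
    (A q r 1)⁻¹ - (B q r 1)⁻¹ ∈ P := by
  have h0 : 1 - q ≠ 0 := by simpa using c.hne 1 0 (by norm_num)
  have h1 := c.hq2
  have h2 : 1 - q * r ≠ 0 := by simpa using c.hne 1 1 (by norm_num)
  have h3 := c.hne 3 2 (by norm_num)
  have h7 : 1 - q ^ 3 * r ≠ 0 := by simpa using c.hne 3 1 (by norm_num)
  have h8 := c.hne 2 2 (by norm_num)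
  have : (A q r 1)⁻¹ - (B q r 1)⁻¹ = q * ((1 - r) / (1 - q ^ 2)) * (1 + q ^ 2 * r ^ 1) *
     ((1 - q ^ 3 * r ^ 1)⁻¹ * (1 - q ^ 2 * r ^ 2)⁻¹ * (1 - q ^ 3 * r ^ 2)⁻¹) := by
    unfold A B
    simp only [pow_one, one_mul]
    field_simp
    ring
  rw [this]
  have D := c.hD
  exact mul_mem (mul_mem (mul_mem c.hq c.hS) (add_mem (one_mem _) (c.m _ _)))
    (mul_mem (mul_mem (D _ _ (by norm_num)) (D _ _ (by norm_num))) (D _ _ (by norm_num)))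

/-- (γ) together with the multiplicative relation. -/
lemma gamma {P : Subsemiring K} {q r : K} (c : Ctx P q r) (i : ℕ) (x : K) (hx : x = (q ^ 4 * r ^ 2) ^ i) :
    Y q r * (H q r x * B q r x / A q r x - H q r (x * (q ^ 4 * r ^ 2))) ∈ P := by
  have key : ∀ a b : ℕ, x * (q ^ a * r ^ b) = q ^ (4 * i + a) * r ^ (2 * i + b) := by
    intro a b; rw [hx]; ring
  have N : ∀ a b : ℕ, 0 < a → 1 - x * (q ^ a * r ^ b) ≠ 0 := by
    intro a b h; rw [key]; exact c.hne _ _ (by omega)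
  have E : ∀ a b : ℕ, 0 < a → (1 - x * (q ^ a * r ^ b))⁻¹ ∈ P := by
    intro a b h; rw [key]; exact c.hD _ _ (by omega)
  have xm : x ∈ P := by rw [hx]; exact pow_mem (c.m _ _) _
  have h1 := c.hq2
  have h2 : 1 - q * r ≠ 0 := by simpa using c.hne 1 1 (by norm_num)
  have h3 := c.hne 3 2 (by norm_num)
  have h4 := c.hne 5 2 (by norm_num)
  have h5 := c.hne 6 2 (by norm_num)
  have h6 := c.hne 7 4 (by norm_num)
  have n1 : 1 - x * q ≠ 0 := by simpa using N 1 0 (by norm_num)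
  have n2 : 1 - x * q ^ 2 ≠ 0 := by simpa using N 2 0 (by norm_num)
  have n3 : 1 - x * (q * r) ≠ 0 := by simpa using N 1 1 (by norm_num)
  have n4 : 1 - x * (q ^ 3 * r) ≠ 0 := by simpa using N 3 1 (by norm_num)
  have n5 : 1 - x * (q ^ 2 * r ^ 2) ≠ 0 := N 2 2 (by norm_num)
  have n6 : 1 - x * (q ^ 3 * r ^ 2) ≠ 0 := N 3 2 (by norm_num)
  have n7 : 1 - x * (q ^ 6 * r ^ 2) ≠ 0 := N 6 2 (by norm_num)
  have n8 : 1 - x * (q ^ 7 * r ^ 4) ≠ 0 := N 7 4 (by norm_num)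
  have eG : H q r x * B q r x / A q r x =
      (1 - x * (q * r)) * (1 - x * (q ^ 2 * r)) * ((1 - x * q)⁻¹ * (1 - x * (q ^ 2 * r ^ 2))⁻¹) := by
    unfold H A B
    simp only [← mul_assoc] at n3 n4 n5 n6 n7 n8
    field_simp
  have eH : H q r (x * (q ^ 4 * r ^ 2)) = (1 - x * (q ^ 6 * r ^ 3)) * (1 - x * (q ^ 7 * r ^ 3)) *
      ((1 - x * (q ^ 6 * r ^ 2))⁻¹ * (1 - x * (q ^ 7 * r ^ 4))⁻¹) := by
    unfold H
    rw [← mul_inv, div_eq_mul_inv]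
    congr 1
    · ring
    · congr 1; ring
  have eD : H q r x * B q r x / A q r x - H q r (x * (q ^ 4 * r ^ 2)) =
      (q * (1 - r) * (1 - q * r) * (1 - q ^ 5 * r ^ 2)) * x * ((1 - x * (q ^ 7 * r ^ 4))⁻¹ + x * q * (1 - x * q)⁻¹)
       * ((1 - x * (q ^ 2 * r ^ 2))⁻¹ * (1 - x * (q ^ 6 * r ^ 2))⁻¹) := by
    rw [eG, eH]
    simp only [← mul_assoc] at n3 n4 n5 n6 n7 n8
    field_simp
    ring
  have : Y q r * (H q r x * B q r x / A q r x - H q r (x * (q ^ 4 * r ^ 2))) =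
      q * ((1 - r) / (1 - q ^ 2)) * ((1 - q ^ 3 * r ^ 2)⁻¹ * (1 - q ^ 6 * r ^ 2)⁻¹ * (1 - q ^ 7 * r ^ 4)⁻¹) *
      ((1 - q * r) * (1 - q * r)⁻¹) * ((1 - q ^ 5 * r ^ 2) * (1 - q ^ 5 * r ^ 2)⁻¹) * 
      (x * ((1 - x * (q ^ 7 * r ^ 4))⁻¹ + x * (q ^ 1 * r ^ 0) * (1 - x * (q ^ 1 * r ^ 0))⁻¹)
       * ((1 - x * (q ^ 2 * r ^ 2))⁻¹ * (1 - x * (q ^ 6 * r ^ 2))⁻¹)) := by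
    rw [eD, pow_one, pow_zero, mul_one]; unfold Y
    simp only [mul_inv, div_eq_mul_inv]
    ring
  rw [this, mul_inv_cancel₀ h2, mul_inv_cancel₀ h4, mul_one, mul_one]
  have D := c.hD
  exact mul_mem (mul_mem (mul_mem c.hq c.hS) (mul_mem (mul_mem (D _ _ (by norm_num))
    (D _ _ (by norm_num))) (D _ _ (by norm_num))))
    (mul_mem (mul_mem xm (add_mem (E _ _ (by norm_num))
      (mul_mem (mul_mem xm (c.m _ _)) (E _ _ (by norm_num)))))
      (mul_mem (E _ _ (by norm_num)) (E _ _ (by norm_num))))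

/-- `Y (H x - 1)` is nonnegative. -/
lemma delta {P : Subsemiring K} {q r : K} (c : Ctx P q r) (i : ℕ) (x : K) (hx : x = (q ^ 4 * r ^ 2) ^ i) :
    Y q r * (H q r x - 1) ∈ P := by
  have key : ∀ a b : ℕ, x * (q ^ a * r ^ b) = q ^ (4 * i + a) * r ^ (2 * i + b) := by
    intro a b; rw [hx]; ring
  have N : ∀ a b : ℕ, 0 < a → 1 - x * (q ^ a * r ^ b) ≠ 0 := by
    intro a b h; rw [key]; exact c.hne _ _ (by omega)
  have E : ∀ a b : ℕ, 0 < a → (1 - x * (q ^ a * r ^ b))⁻¹ ∈ P := by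
    intro a b h; rw [key]; exact c.hD _ _ (by omega)
  have xm : x ∈ P := by rw [hx]; exact pow_mem (c.m _ _) _
  have h2 : 1 - q * r ≠ 0 := by simpa using c.hne 1 1 (by norm_num)
  have n2 : 1 - x * q ^ 2 ≠ 0 := by simpa using N 2 0 (by norm_num)
  have n6 : 1 - x * (q ^ 3 * r ^ 2) ≠ 0 := N 3 2 (by norm_num)
  have eH : H q r x - 1 = q * (1 - r) * (1 - q * r) * (q * x) *
      ((1 - x * q ^ 2)⁻¹ * (1 - x * (q ^ 3 * r ^ 2))⁻¹) := by
    unfold H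
    simp only [← mul_assoc] at n6
    field_simp
    ring
  have : Y q r * (H q r x - 1) =
      q * ((1 - r) / (1 - q ^ 2)) * ((1 - q ^ 3 * r ^ 2)⁻¹ * (1 - q ^ 5 * r ^ 2)⁻¹ *
       (1 - q ^ 6 * r ^ 2)⁻¹ * (1 - q ^ 7 * r ^ 4)⁻¹) *
      ((1 - q * r) * (1 - q * r)⁻¹) * (q * x) *
      ((1 - x * (q ^ 2 * r ^ 0))⁻¹ * (1 - x * (q ^ 3 * r ^ 2))⁻¹) := by
    rw [eH, pow_zero, mul_one]; unfold Y
    simp only [mul_inv, div_eq_mul_inv]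
    ring
  rw [this, mul_inv_cancel₀ h2, mul_one]
  have D := c.hD
  exact mul_mem (mul_mem (mul_mem (mul_mem c.hq c.hS) (mul_mem (mul_mem (mul_mem (D _ _ (by norm_num))
    (D _ _ (by norm_num))) (D _ _ (by norm_num))) (D _ _ (by norm_num)))) (mul_mem c.hq xm))
      (mul_mem (E _ _ (by norm_num)) (E _ _ (by norm_num)))

lemma AB {P : Subsemiring K} {q r : K} (c : Ctx P q r) (i : ℕ) :
    (A q r ((q ^ 4 * r ^ 2) ^ i))⁻¹ ∈ P ∧ (B q r ((q ^ 4 * r ^ 2) ^ i))⁻¹ ∈ P ∧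
    A q r ((q ^ 4 * r ^ 2) ^ i) ≠ 0 ∧ B q r ((q ^ 4 * r ^ 2) ^ i) ≠ 0 := by
  generalize hx : (q ^ 4 * r ^ 2) ^ i = x
  have key : ∀ a b : ℕ, x * (q ^ a * r ^ b) = q ^ (4 * i + a) * r ^ (2 * i + b) := by
    intro a b; rw [← hx]; ring
  have N : ∀ a b : ℕ, 0 < a → 1 - x * (q ^ a * r ^ b) ≠ 0 := by
    intro a b h; rw [key]; exact c.hne _ _ (by omega)
  have E : ∀ a b : ℕ, 0 < a → (1 - x * (q ^ a * r ^ b))⁻¹ ∈ P := by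
    intro a b h; rw [key]; exact c.hD _ _ (by omega)
  have eA : A q r x = (1 - x * (q ^ 1 * r ^ 0)) * ((1 - x * (q ^ 3 * r ^ 1)) * (1 - x * (q ^ 2 * r ^ 2))) := by
    unfold A; ring
  have eB : B q r x = (1 - x * (q ^ 2 * r ^ 0)) * ((1 - x * (q ^ 1 * r ^ 1)) * (1 - x * (q ^ 3 * r ^ 2))) := by
    unfold B; ring
  rw [eA, eB]
  refine ⟨?_, ?_, ?_, ?_⟩
  · rw [mul_inv, mul_inv]
    exact mul_mem (E _ _ (by norm_num)) (mul_mem (E _ _ (by norm_num)) (E _ _ (by norm_num)))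
  · rw [mul_inv, mul_inv]
    exact mul_mem (E _ _ (by norm_num)) (mul_mem (E _ _ (by norm_num)) (E _ _ (by norm_num)))
  · exact mul_ne_zero (N _ _ (by norm_num)) (mul_ne_zero (N _ _ (by norm_num)) (N _ _ (by norm_num)))
  · exact mul_ne_zero (N _ _ (by norm_num)) (mul_ne_zero (N _ _ (by norm_num)) (N _ _ (by norm_num)))

lemma prodB_mem {P : Subsemiring K} {q r : K} (c : Ctx P q r) (n : ℕ) :
    (∏ j ∈ Finset.range n, B q r ((q ^ 4 * r ^ 2) ^ (j + 2)))⁻¹ ∈ P := by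
  rw [← Finset.prod_inv_distrib]
  exact prod_mem fun j _ => (AB c _).2.1

lemma inv_step {P : Subsemiring K} {q r : K} (c : Ctx P q r) (n : ℕ) :
    (A q r 1 * A q r (q ^ 4 * r ^ 2))⁻¹ * (∏ j ∈ Finset.range n, A q r ((q ^ 4 * r ^ 2) ^ (j + 2)))⁻¹
    - Y q r * (∏ j ∈ Finset.range n, B q r ((q ^ 4 * r ^ 2) ^ (j + 2)))⁻¹ *
      H q r ((q ^ 4 * r ^ 2) ^ (n + 2)) ∈ P := by
  induction n with
  | zero =>
    have := beta c
    have e : (q ^ 4 * r ^ 2) ^ (0 + 2) = q ^ 8 * r ^ 4 := by ring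
    rw [e]; simpa using this
  | succ n ih =>
    rw [Finset.prod_range_succ, Finset.prod_range_succ]
    obtain ⟨a1, b1, a0, b0⟩ := AB c (n + 2)
    have g := gamma c (n + 2) _ rfl
    have pb := prodB_mem c n
    rw [show (q ^ 4 * r ^ 2) ^ (n + 1 + 2) = (q ^ 4 * r ^ 2) ^ (n + 2) * (q ^ 4 * r ^ 2) from pow_succ _ _]
    generalize (q ^ 4 * r ^ 2) ^ (n + 2) = x at *
    rw [mul_inv (∏ j ∈ Finset.range n, A q r ((q ^ 4 * r ^ 2) ^ (j + 2))),
      mul_inv (∏ j ∈ Finset.range n, B q r ((q ^ 4 * r ^ 2) ^ (j + 2)))]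
    generalize (∏ j ∈ Finset.range n, A q r ((q ^ 4 * r ^ 2) ^ (j + 2)))⁻¹ = PA at *
    generalize (∏ j ∈ Finset.range n, B q r ((q ^ 4 * r ^ 2) ^ (j + 2)))⁻¹ = PB at *
    have := add_mem (mul_mem ih a1) (mul_mem (mul_mem pb b1) g)
    convert this using 1
    rw [div_eq_mul_inv]
    have : B q r x * (B q r x)⁻¹ = 1 := mul_inv_cancel₀ b0
    linear_combination -(PB * Y q r * H q r x * (A q r x)⁻¹) * this

theorem main_abs {P : Subsemiring K} {q r : K} (c : Ctx P q r) (L : ℕ) (hL : 0 < L) :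
    (∏ j ∈ Finset.range L, A q r ((q ^ 4 * r ^ 2) ^ j))⁻¹ -
    (∏ j ∈ Finset.range L, B q r ((q ^ 4 * r ^ 2) ^ j))⁻¹ ∈ P := by
  rcases L with _ | _ | n
  · omega
  · simpa using one_case c
  · rw [Finset.prod_range_succ', Finset.prod_range_succ', Finset.prod_range_succ', Finset.prod_range_succ']
    have i := inv_step c n
    have pb := prodB_mem c n
    have al := alpha c
    have de := delta c (n + 2) _ rfl
    simp only [zero_add, pow_one, pow_zero, add_assoc, one_add_one_eq_two]
    rw [mul_inv] at i al
    simp only [mul_inv]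
    have := add_mem i (mul_mem pb (add_mem al de))
    convert this using 1
    ring


lemma geom_coeff (m : ℕ) (hm : 0 < m) :
    ∃ f : ℚ⟦X⟧, (∀ n, 0 ≤ coeff n f) ∧ (1 - (X : ℚ⟦X⟧) ^ m) * f = 1 := by
  refine ⟨PowerSeries.mk fun n => if m ∣ n then 1 else 0, fun n => ?_, ?_⟩
  · rw [coeff_mk]; split_ifs <;> norm_num
  · ext n
    rw [sub_mul, one_mul, map_sub, coeff_X_pow_mul', coeff_mk, coeff_one]
    by_cases h : m ≤ n
    · rw [if_pos h, coeff_mk, if_neg (show ¬ n = 0 by omega)]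
      have : m ∣ n - m ↔ m ∣ n := by
        rw [Nat.dvd_sub_self_right]; constructor
        · rintro (h' | h')
          · exact h'
          · have : n = m := by omega
            exact this ▸ dvd_rfl
        · exact Or.inl
      simp [this]
    · rw [if_neg h]
      rcases Nat.eq_zero_or_pos n with rfl | h0
      · simp
      · have : ¬ m ∣ n := fun hd => h (Nat.le_of_dvd h0 hd)
        simp [this, h0.ne']

/-- series with nonnegative coefficients -/
def NN : Subsemiring ℚ⟦X⟧ where
  carrier := {f | ∀ n, 0 ≤ coeff n f}
  mul_mem' := by
    intro f g hf hg n
    rw [coeff_mul]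
    exact Finset.sum_nonneg fun p _ => mul_nonneg (hf _) (hg _)
  one_mem' := by
    intro n; rw [coeff_one]; split_ifs <;> norm_num
  add_mem' := by
    intro f g hf hg n
    rw [map_add]; exact add_nonneg (hf n) (hg n)
  zero_mem' := by intro n; simp

lemma X_mem : (X : ℚ⟦X⟧) ∈ NN := by
  intro n; rw [coeff_X]; split_ifs <;> norm_num

lemma ctx (k : ℕ) : Ctx (NN.map (algebraMap ℚ⟦X⟧ (FractionRing ℚ⟦X⟧)))
    (algebraMap ℚ⟦X⟧ (FractionRing ℚ⟦X⟧) X) (algebraMap ℚ⟦X⟧ (FractionRing ℚ⟦X⟧) (X ^ (2 * k))) := by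
  have key : ∀ a b : ℕ, 1 - algebraMap ℚ⟦X⟧ (FractionRing ℚ⟦X⟧) X ^ a *
      algebraMap ℚ⟦X⟧ (FractionRing ℚ⟦X⟧) (X ^ (2 * k)) ^ b =
      algebraMap ℚ⟦X⟧ (FractionRing ℚ⟦X⟧) (1 - X ^ (a + 2 * k * b)) := by
    intro a b
    rw [← map_pow, ← map_pow, ← map_mul, ← pow_mul, ← pow_add, map_sub, map_one]
  have inv : ∀ m : ℕ, 0 < m → ∃ f ∈ NN, algebraMap ℚ⟦X⟧ (FractionRing ℚ⟦X⟧) (1 - X ^ m) *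
      algebraMap ℚ⟦X⟧ (FractionRing ℚ⟦X⟧) f = 1 := by
    intro m hm
    obtain ⟨f, h1, h2⟩ := geom_coeff m hm
    exact ⟨f, h1, by rw [← map_mul, h2, map_one]⟩
  have hne : ∀ a b : ℕ, 0 < a → 1 - algebraMap ℚ⟦X⟧ (FractionRing ℚ⟦X⟧) X ^ a *
      algebraMap ℚ⟦X⟧ (FractionRing ℚ⟦X⟧) (X ^ (2 * k)) ^ b ≠ 0 := by
    intro a b h
    obtain ⟨f, _, h2⟩ := inv (a + 2 * k * b) (by omega)
    rw [key]
    exact left_ne_zero_of_mul_eq_one h2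
  have hq2 : 1 - algebraMap ℚ⟦X⟧ (FractionRing ℚ⟦X⟧) X ^ 2 ≠ 0 := by
    simpa using hne 2 0 (by norm_num)
  refine ⟨⟨X, X_mem, rfl⟩, ⟨_, pow_mem X_mem _, rfl⟩, ?_, hne, ?_, hq2⟩
  · intro a b h
    obtain ⟨f, h1, h2⟩ := inv (a + 2 * k * b) (by omega)
    rw [key]
    exact ⟨f, h1, eq_inv_of_mul_eq_one_right h2⟩
  · refine ⟨∑ i ∈ Finset.range k, (X ^ 2) ^ i, sum_mem fun i _ => pow_mem (pow_mem X_mem _) _, ?_⟩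
    rw [eq_div_iff hq2, ← map_one (algebraMap ℚ⟦X⟧ (FractionRing ℚ⟦X⟧)), ← map_pow, ← map_sub,
      ← map_sub, ← map_mul]
    congr 1
    rw [pow_mul, geom_sum_mul_neg]

lemma map_inv' (f : ℚ⟦X⟧) (hf : constantCoeff f ≠ 0) :
    algebraMap ℚ⟦X⟧ (FractionRing ℚ⟦X⟧) f⁻¹ = (algebraMap ℚ⟦X⟧ (FractionRing ℚ⟦X⟧) f)⁻¹ := by
  apply eq_inv_of_mul_eq_one_right
  rw [← map_mul, PowerSeries.mul_inv_cancel f hf, map_one]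

end BG

theorem berkovich_grizzell_odd_y (L y : ℕ) (hL : 0 < L) (hy : 1 < y) (hyo : Odd y) (n : ℕ) :
    0 ≤ PowerSeries.coeff (R := ℚ) n
      ((∏ j ∈ Finset.range L,
          (1 - (PowerSeries.X : PowerSeries ℚ) ^ (1 + j * (2 * y + 2))) *
          ((1 - (PowerSeries.X : PowerSeries ℚ) ^ (y + 2 + j * (2 * y + 2))) *
           (1 - (PowerSeries.X : PowerSeries ℚ) ^ (2 * y + j * (2 * y + 2)))))⁻¹ -
       (∏ j ∈ Finset.range L,
          (1 - (PowerSeries.X : PowerSeries ℚ) ^ (2 + j * (2 * y + 2))) *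
          ((1 - (PowerSeries.X : PowerSeries ℚ) ^ (y + j * (2 * y + 2))) *
           (1 - (PowerSeries.X : PowerSeries ℚ) ^ (2 * y + 1 + j * (2 * y + 2)))))⁻¹) := by
  obtain ⟨k, rfl⟩ := hyo
  obtain ⟨f, hf, hfe⟩ := BG.main_abs (BG.ctx k) L hL
  refine le_of_le_of_eq (hf n) (congrArg _ ?_)
  apply IsFractionRing.injective ℚ⟦X⟧ (FractionRing ℚ⟦X⟧)
  have cc : ∀ m : ℕ, 0 < m → constantCoeff (1 - (X : ℚ⟦X⟧) ^ m) = 1 := by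
    intro m hm
    simp [hm.ne']
  change algebraMap ℚ⟦X⟧ (FractionRing ℚ⟦X⟧) f = _ at hfe
  rw [hfe, map_sub, BG.map_inv', BG.map_inv', map_prod, map_prod]
  · congr 3
    · funext j
      simp only [map_mul, map_sub, map_one, map_pow, BG.A]
      ring
    · funext j
      simp only [map_mul, map_sub, map_one, map_pow, BG.B]
      ring
  all_goals
    rw [map_prod, Finset.prod_eq_one]
    · exact one_ne_zero
    · intro j _
      rw [map_mul, map_mul, cc _ (by omega), cc _ (by omega), cc _ (by omega)]
      norm_num
end

section
/- (Berkovich–Grizzell) Let L > 0 be an integer, let y > 1 be an odd integer, and for all positive integers n with largest part bounded as follows: for every integer n, the number of partitions of n into parts congruent to 1, y+2, or 2y modulo 2y+2 with every part less than (2y+2)L is greater than or equal to the number of partitions of n into parts congruent to 2, y, or 2y+1 modulo 2y+2 with every part less than (2y+2)L; that is, P1(L, y, n) ≥ P2(L, y, n). -/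
namespace BG

def ee (L : ℕ) (d : ℕ → ℕ) (j : ℕ) : ℕ := if j < L then d j % 2 else d j

def uu (L k : ℕ) (a d : ℕ → ℕ) (j : ℕ) : ℕ :=
  ee L d j + (if j < L then 2 * a j else 0) +
    (if j = 0 then 2 * k * ∑ i ∈ Finset.range (2 * L), ee L d i else 0)

def ff (L k : ℕ) (a d : ℕ → ℕ) : Multiset ℕ :=
  (∑ j ∈ Finset.range (2 * L), Multiset.replicate (uu L k a d j) ((2 * k + 2) * j + 1)) +
  ∑ j ∈ Finset.range L, Multiset.replicate (d j / 2) (2 * ((2 * k + 2) * j + 2 * k + 1))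

lemma sum_ext_range (L : ℕ) (g : ℕ → ℕ) :
    ∑ j ∈ Finset.range L, g j = ∑ j ∈ Finset.range (2 * L), if j < L then g j else 0 := by
  rw [← Finset.sum_filter]
  apply Finset.sum_congr _ (fun _ _ => rfl)
  ext x; simp; omega

lemma ff_sum (L k : ℕ) (hL : 0 < L) (a d : ℕ → ℕ) :
    (ff L k a d).sum = (∑ j ∈ Finset.range L, a j * (2 * ((2 * k + 2) * j + 1))) +
      ∑ j ∈ Finset.range (2 * L), d j * ((2 * k + 2) * j + 2 * k + 1) := by
  have h0 : ∑ j ∈ Finset.range (2 * L), (if j = 0 then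
      2 * k * ∑ i ∈ Finset.range (2 * L), ee L d i else 0) * ((2 * k + 2) * j + 1)
      = ∑ j ∈ Finset.range (2 * L), 2 * k * ee L d j := by
    rw [Finset.sum_eq_single 0]
    · simp [Finset.mul_sum]
    · intro b _ hb; simp [hb]
    · intro h; simp at h; omega
  simp only [ff, Multiset.sum_add, Multiset.sum_sum, Multiset.sum_replicate, smul_eq_mul]
  simp only [uu, add_mul _ _ ((2 * k + 2) * _ + 1), Finset.sum_add_distrib]
  rw [h0, sum_ext_range L, sum_ext_range L]
  simp only [← Finset.sum_add_distrib]
  apply Finset.sum_congr rfl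
  intro j _
  unfold ee
  split_ifs with h
  · have := Nat.div_add_mod (d j) 2
    generalize d j / 2 = p at *
    generalize d j % 2 = r at *
    rw [← this]; ring
  · ring

lemma count_A (L k : ℕ) (a d : ℕ → ℕ) (i : ℕ) (hi : i < 2 * L) :
    (ff L k a d).count ((2 * k + 2) * i + 1) = uu L k a d i := by
  simp only [ff, Multiset.count_add, Multiset.count_sum', Multiset.count_replicate]
  rw [Finset.sum_eq_single i, Finset.sum_eq_zero]
  · simp
  · intro j _
    rw [if_neg]
    intro h
    have : (2 * k + 2) * i = 2 * ((k + 1) * i) := by ring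
    omega
  · intro j _ hj
    rw [if_neg]
    intro h
    apply hj
    exact Nat.eq_of_mul_eq_mul_left (by omega : 0 < 2 * k + 2) (by omega)
  · intro h; simp at h; omega

lemma count_C (L k : ℕ) (a d : ℕ → ℕ) (i : ℕ) (hi : i < L) :
    (ff L k a d).count (2 * ((2 * k + 2) * i + 2 * k + 1)) = d i / 2 := by
  simp only [ff, Multiset.count_add, Multiset.count_sum', Multiset.count_replicate]
  rw [Finset.sum_eq_zero, Finset.sum_eq_single i]
  · simp
  · intro j _ hj
    rw [if_neg]
    intro h
    apply hj
    exact Nat.eq_of_mul_eq_mul_left (by omega : 0 < 2 * k + 2) (by omega)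
  · intro h; simp at h; omega
  · intro j _
    rw [if_neg]
    intro h
    have : (2 * k + 2) * j = 2 * ((k + 1) * j) := by ring
    omega

lemma ff_inj (L k : ℕ) (hL : 0 < L) (a d a' d' : ℕ → ℕ) (h : ff L k a d = ff L k a' d') :
    (∀ i < L, a i = a' i) ∧ ∀ i < 2 * L, d i = d' i := by
  have hA : ∀ i < 2 * L, uu L k a d i = uu L k a' d' i := fun i hi => by
    rw [← count_A L k a d i hi, h, count_A L k a' d' i hi]
  have hC : ∀ i < L, d i / 2 = d' i / 2 := fun i hi => by
    rw [← count_C L k a d i hi, h, count_C L k a' d' i hi]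
  have hd : ∀ i < 2 * L, d i = d' i := by
    intro i hi
    have h1 := hA i hi
    unfold uu at h1
    simp only [mul_assoc] at h1
    generalize k * ∑ i ∈ Finset.range (2 * L), ee L d i = x at h1
    generalize k * ∑ i ∈ Finset.range (2 * L), ee L d' i = x' at h1
    unfold ee at h1
    by_cases hl : i < L
    · have h2 := hC i hl
      simp only [hl, if_true] at h1
      split_ifs at h1 <;> omega
    · simp only [hl, if_false] at h1
      rw [if_neg (by omega), if_neg (by omega)] at h1
      omega
  refine ⟨?_, hd⟩
  intro i hi
  have he : ∀ i < 2 * L, ee L d i = ee L d' i := fun i hi => by simp only [ee, hd i hi]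
  have hs : ∑ i ∈ Finset.range (2 * L), ee L d i = ∑ i ∈ Finset.range (2 * L), ee L d' i :=
    Finset.sum_congr rfl fun i hi => he i (Finset.mem_range.1 hi)
  have h1 := hA i (by omega)
  unfold uu at h1
  rw [hs, he i (by omega), if_pos hi, if_pos hi] at h1
  omega

lemma mem_ff (L k : ℕ) (a d : ℕ → ℕ) (x : ℕ) (hx : x ∈ ff L k a d) :
    (∃ j < 2 * L, x = (2 * k + 2) * j + 1) ∨
      ∃ j < L, x = 2 * ((2 * k + 2) * j + 2 * k + 1) := by
  simp only [ff, Multiset.mem_add, Multiset.mem_sum, Multiset.mem_replicate,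
    Finset.mem_range] at hx
  rcases hx with ⟨j, hj, _, h⟩ | ⟨j, hj, _, h⟩
  · exact Or.inl ⟨j, hj, h⟩
  · exact Or.inr ⟨j, hj, h⟩

def al (k : ℕ) (s : Multiset ℕ) (j : ℕ) : ℕ := s.count (2 * ((2 * k + 2) * j + 1))
def de (k : ℕ) (s : Multiset ℕ) (j : ℕ) : ℕ := s.count ((2 * k + 2) * j + 2 * k + 1)

lemma good_sum (L k : ℕ) (s : Multiset ℕ)
    (hs : ∀ x ∈ s, (∃ j < L, x = 2 * ((2 * k + 2) * j + 1)) ∨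
      ∃ j < 2 * L, x = (2 * k + 2) * j + 2 * k + 1) :
    s.sum = (∑ j ∈ Finset.range L, al k s j * (2 * ((2 * k + 2) * j + 1))) +
      ∑ j ∈ Finset.range (2 * L), de k s j * ((2 * k + 2) * j + 2 * k + 1) := by
  classical
  rw [Finset.sum_multiset_count_of_subset s
    ((Finset.range L).image (fun j => 2 * ((2 * k + 2) * j + 1)) ∪
     (Finset.range (2 * L)).image (fun j => (2 * k + 2) * j + 2 * k + 1))]
  · rw [Finset.sum_union, Finset.sum_image, Finset.sum_image]
    · simp [al, de]
    · intro i _ j _ h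
      simp only at h
      exact Nat.eq_of_mul_eq_mul_left (by omega : 0 < 2 * k + 2) (by omega)
    · intro i _ j _ h
      simp only at h
      exact Nat.eq_of_mul_eq_mul_left (by omega : 0 < 2 * k + 2) (by omega)
    · rw [Finset.disjoint_left]
      intro x h1 h2
      simp only [Finset.mem_image] at h1 h2
      obtain ⟨i, _, h1⟩ := h1
      obtain ⟨j, _, h2⟩ := h2
      have : (2 * k + 2) * j = 2 * ((k + 1) * j) := by ring
      omega
  · intro x hx
    simp only [Multiset.mem_toFinset] at hx
    simp only [Finset.mem_union, Finset.mem_image, Finset.mem_range]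
    rcases hs x hx with ⟨j, hj, h⟩ | ⟨j, hj, h⟩
    · exact Or.inl ⟨j, hj, h.symm⟩
    · exact Or.inr ⟨j, hj, h.symm⟩

lemma good_of (L k x : ℕ)
    (h : (x % (2 * (2 * k + 1) + 2) = 2 ∨ x % (2 * (2 * k + 1) + 2) = 2 * k + 1 ∨
          x % (2 * (2 * k + 1) + 2) = 2 * (2 * k + 1) + 1) ∧ x < (2 * (2 * k + 1) + 2) * L) :
    (∃ j < L, x = 2 * ((2 * k + 2) * j + 1)) ∨
      ∃ j < 2 * L, x = (2 * k + 2) * j + 2 * k + 1 := by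
  obtain ⟨h, hl⟩ := h
  have hq : x / (2 * (2 * k + 1) + 2) < L := Nat.div_lt_of_lt_mul hl
  have hx := Nat.div_add_mod x (2 * (2 * k + 1) + 2)
  generalize x / (2 * (2 * k + 1) + 2) = q at *
  rcases h with h | h | h <;> rw [h] at hx
  · exact Or.inl ⟨q, hq, by rw [← hx]; ring⟩
  · exact Or.inr ⟨2 * q, by omega, by rw [← hx]; ring⟩
  · exact Or.inr ⟨2 * q + 1, by omega, by rw [← hx]; ring⟩

lemma lt_aux (L m q r : ℕ) (hq : q < L) (hr : r < m) : m * q + r < m * L :=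
  calc m * q + r < m * q + m := by omega
    _ = m * (q + 1) := by ring
    _ ≤ m * L := Nat.mul_le_mul_left _ hq

lemma ok_of (L k x : ℕ) (hk : 0 < k)
    (h : (∃ j < 2 * L, x = (2 * k + 2) * j + 1) ∨
      ∃ j < L, x = 2 * ((2 * k + 2) * j + 2 * k + 1)) :
    (x % (2 * (2 * k + 1) + 2) = 1 ∨ x % (2 * (2 * k + 1) + 2) = 2 * k + 1 + 2 ∨
          x % (2 * (2 * k + 1) + 2) = 2 * (2 * k + 1)) ∧ x < (2 * (2 * k + 1) + 2) * L := by
  have key : ∃ q < L, ∃ r, (r = 1 ∨ r = 2 * k + 1 + 2 ∨ r = 2 * (2 * k + 1)) ∧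
      x = (2 * (2 * k + 1) + 2) * q + r := by
    rcases h with ⟨j, hj, h⟩ | ⟨j, hj, h⟩
    · rcases Nat.even_or_odd' j with ⟨q, hq | hq⟩
      · exact ⟨q, by omega, 1, by simp, by rw [h, hq]; ring⟩
      · exact ⟨q, by omega, 2 * k + 1 + 2, by simp, by rw [h, hq]; ring⟩
    · exact ⟨j, hj, 2 * (2 * k + 1), by simp, by rw [h]; ring⟩
  obtain ⟨q, hq, r, hr, hx⟩ := key
  have hrl : r < 2 * (2 * k + 1) + 2 := by omega
  have hm : x % (2 * (2 * k + 1) + 2) = r := by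
    rw [hx, Nat.mul_add_mod, Nat.mod_eq_of_lt hrl]
  refine ⟨by rw [hm]; exact hr, ?_⟩
  rw [hx]
  exact lt_aux _ _ _ _ hq hrl

end BG

theorem berkovich_grizzell_partition_inequality (L y : ℕ) (hL : 0 < L)
    (hy : 1 < y) (hyo : Odd y) (n : ℕ) :
    (Finset.univ.filter (fun p : Nat.Partition n =>
        ∀ x ∈ p.parts, (x % (2 * y + 2) = 1 ∨ x % (2 * y + 2) = y + 2 ∨
          x % (2 * y + 2) = 2 * y) ∧ x < (2 * y + 2) * L)).card ≥
    (Finset.univ.filter (fun p : Nat.Partition n =>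
        ∀ x ∈ p.parts, (x % (2 * y + 2) = 2 ∨ x % (2 * y + 2) = y ∨
          x % (2 * y + 2) = 2 * y + 1) ∧ x < (2 * y + 2) * L)).card := by
  obtain ⟨k, rfl⟩ := hyo
  have hk : 0 < k := by omega
  apply Finset.card_le_card_of_forall_subsingleton
    (fun p q : Nat.Partition n => q.parts = BG.ff L k (BG.al k p.parts) (BG.de k p.parts))
  · intro p hp
    simp only [Finset.mem_filter, Finset.mem_univ, true_and] at hp
    refine ⟨⟨BG.ff L k (BG.al k p.parts) (BG.de k p.parts), ?_, ?_⟩, ?_, rfl⟩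
    · intro x hx
      rcases BG.mem_ff _ _ _ _ _ hx with ⟨j, _, h⟩ | ⟨j, _, h⟩ <;> omega
    · rw [BG.ff_sum L k hL, ← BG.good_sum L k p.parts fun x hx => BG.good_of L k x (hp x hx),
        p.parts_sum]
    · simp only [Finset.mem_filter, Finset.mem_univ, true_and]
      intro x hx
      exact BG.ok_of L k x hk (BG.mem_ff _ _ _ _ _ hx)
  · intro q _ p hp p' hp'
    simp only [Finset.mem_filter, Finset.mem_univ, true_and, Set.mem_setOf_eq] at hp hp'
    obtain ⟨hp, h⟩ := hp
    obtain ⟨hp', h'⟩ := hp'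
    obtain ⟨ha, hd⟩ := BG.ff_inj L k hL _ _ _ _ (h.symm.trans h')
    have hcount : ∀ x, ((∃ j < L, x = 2 * ((2 * k + 2) * j + 1)) ∨
      ∃ j < 2 * L, x = (2 * k + 2) * j + 2 * k + 1) → p.parts.count x = p'.parts.count x := by
      rintro x (⟨j, hj, rfl⟩ | ⟨j, hj, rfl⟩)
      · exact ha j hj
      · exact hd j hj
    apply Nat.Partition.ext
    ext x
    by_cases h1 : x ∈ p.parts
    · exact hcount x (BG.good_of L k x (hp x h1))
    · by_cases h2 : x ∈ p'.parts
      · exact hcount x (BG.good_of L k x (hp' x h2))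
      · rw [Multiset.count_eq_zero_of_notMem h1, Multiset.count_eq_zero_of_notMem h2]
end

section
/- (Berkovich–Grizzell) Let (L, m, x, y, z, r, R, ρ) be any octuple of positive integers. In the ring of formal power series over ℚ in one variable q, write a(n) for the coefficients of (∏_{j=0}^{L−1} (1 − q^{x+jm})(1 − q^{y+jm})(1 − q^{z+jm})(1 − q^{rx+Ry+ρz+jm}))⁻¹ − (∏_{j=0}^{L−1} (1 − q^{rx+jm})(1 − q^{Ry+jm})(1 − q^{ρz+jm})(1 − q^{x+y+z+jm}))⁻¹ = Σ_{n≥0} a(n) q^n. Then a(n) ≥ 0 for all n ≥ 0. -/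
open PowerSeries

namespace BG

/-- complete homogeneous sums: `hh w L n = h_n(w 0, ..., w (L-1))`. -/
def hh {A : Type*} [CommRing A] (w : ℕ → A) : ℕ → ℕ → A
  | 0, 0 => 1
  | 0, _ + 1 => 0
  | L + 1, 0 => hh w L 0
  | L + 1, n + 1 => hh w L (n + 1) + w L * hh w (L + 1) n

section gen
variable {A : Type*} [CommRing A]

lemma hh_trunc (w : ℕ → A) (u : A) (N : ℕ) : ∀ L, ∃ E,
    (∏ j ∈ Finset.range L, (1 - w j * u)) * (∑ a ∈ Finset.range (N + 1), u ^ a * hh w L a)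
      = 1 + u ^ (N + 1) * E := by
  intro L
  induction L with
  | zero =>
    refine ⟨0, ?_⟩
    rw [Finset.sum_range_succ']
    simp [hh]
  | succ L ih =>
    obtain ⟨E, hE⟩ := ih
    have key : ∀ M, (1 - w L * u) * (∑ a ∈ Finset.range (M + 1), u ^ a * hh w (L + 1) a)
        = (∑ a ∈ Finset.range (M + 1), u ^ a * hh w L a)
          - u ^ (M + 1) * (w L * hh w (L + 1) M) := by
      intro M
      induction M with
      | zero => simp [hh]; ring
      | succ M ihM =>
        rw [Finset.sum_range_succ, mul_add, ihM, Finset.sum_range_succ _ (M + 1)]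
        simp only [hh]
        ring
    refine ⟨E - (∏ j ∈ Finset.range L, (1 - w j * u)) * (w L * hh w (L + 1) N), ?_⟩
    rw [Finset.prod_range_succ, mul_assoc, key, mul_sub, hE]
    ring
end gen

section ord
variable {A : Type*} [CommRing A] [PartialOrder A] [IsOrderedRing A]

lemma hh_nonneg (w : ℕ → A) (hw : ∀ j, 0 ≤ w j) : ∀ L n, 0 ≤ hh w L n := by
  intro L
  induction L with
  | zero => intro n; cases n <;> simp [hh]
  | succ L ih =>
    intro n
    induction n with
    | zero => simpa [hh] using ih 0
    | succ n ihn => simp only [hh]; exact add_nonneg (ih _) (mul_nonneg (hw _) ihn)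

lemma hh_mono (w : ℕ → A) (hw : ∀ j, 0 ≤ w j) (h0 : w 0 = 1) :
    ∀ L, 0 < L → Monotone (hh w L) := by
  intro L hL
  refine monotone_nat_of_le_succ ?_
  induction L, hL using Nat.le_induction with
  | base =>
    intro n
    have : ∀ n, hh w 1 n = 1 := by
      intro n; induction n with
      | zero => simp [hh]
      | succ n ih => simp [hh, h0, ih]
    simp [this]
  | succ L hL ih =>
    intro n
    induction n with
    | zero =>
      have := ih 0
      simp only [hh]
      exact le_add_of_le_of_nonneg this (mul_nonneg (hw _) (hh_nonneg w hw _ _))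
    | succ n ihn =>
      rw [hh, hh]
      exact add_le_add (ih _) (mul_le_mul_of_nonneg_left ihn (hw _))

def LC (h : ℕ → A) : Prop := ∀ e a b, a ≤ b → h a * h (b + e) ≤ h (a + e) * h b

lemma hh_lc (w : ℕ → A) (hw : ∀ j, 0 ≤ w j) : ∀ L, LC (hh w L) := by
  intro L
  induction L with
  | zero =>
    intro e a b hab
    rcases Nat.eq_zero_or_pos e with rfl | he
    · simp
    · obtain ⟨k, hk⟩ : ∃ k, b + e = k + 1 := ⟨b + e - 1, by omega⟩
      rw [hk]
      simp only [hh, mul_zero]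
      exact mul_nonneg (hh_nonneg w hw _ _) (hh_nonneg w hw _ _)
  | succ L ih =>
    have nn := hh_nonneg w hw
    have C : ∀ a b e, a ≤ b →
        hh w (L+1) a * hh w L (b + e + 1) ≤ hh w L (a + e + 1) * hh w (L+1) b := by
      intro a
      induction a with
      | zero =>
        intro b e _
        have h1 := ih (e+1) 0 b (Nat.zero_le _)
        have h2 : hh w L b ≤ hh w (L+1) b := by
          cases b with
          | zero => simp [hh]
          | succ b => simp only [hh]; exact le_add_of_nonneg_right (mul_nonneg (hw _) (nn _ _))
        calc hh w (L+1) 0 * hh w L (b + e + 1) = hh w L 0 * hh w L (b + (e + 1)) := by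
              simp [hh, add_assoc]
          _ ≤ hh w L (0 + (e+1)) * hh w L b := h1
          _ = hh w L (0 + e + 1) * hh w L b := by simp
          _ ≤ _ := mul_le_mul_of_nonneg_left h2 (nn _ _)
      | succ a iha =>
        intro b e hab
        obtain ⟨b, rfl⟩ : ∃ b', b = b' + 1 := ⟨b - 1, by omega⟩
        have hab' : a ≤ b := by omega
        have h1 := iha b (e+1) hab'
        have h2 := ih (e+1) (a+1) (b+1) hab
        have e1 : b + 1 + e + 1 = b + (e+1) + 1 := by omega
        have e2 : a + 1 + e + 1 = a + (e+1) + 1 := by omega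
        have e3 : b + 1 + (e + 1) = b + (e+1) + 1 := by omega
        have e4 : a + 1 + (e + 1) = a + (e+1) + 1 := by omega
        rw [e3, e4] at h2
        rw [e1, e2]
        have h3 := mul_le_mul_of_nonneg_left h1 (hw L)
        rw [show hh w (L+1) (a+1) = hh w L (a+1) + w L * hh w (L+1) a by simp only [hh],
          show hh w (L+1) (b+1) = hh w L (b+1) + w L * hh w (L+1) b by simp only [hh]]
        calc _ = hh w L (a+1) * hh w L (b + (e+1) + 1)
              + w L * (hh w (L+1) a * hh w L (b + (e+1) + 1)) := by ring
          _ ≤ _ := add_le_add h2 h3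
          _ = _ := by ring
    have S : ∀ a b, a ≤ b →
        hh w (L+1) a * hh w (L+1) (b+1) ≤ hh w (L+1) (a+1) * hh w (L+1) b := by
      intro a b hab
      have h1 := C a b 0 hab
      simp only [add_zero] at h1
      rw [show hh w (L+1) (a+1) = hh w L (a+1) + w L * hh w (L+1) a by simp only [hh],
          show hh w (L+1) (b+1) = hh w L (b+1) + w L * hh w (L+1) b by simp only [hh]]
      calc _ = hh w (L+1) a * hh w L (b+1) + w L * (hh w (L+1) a * hh w (L+1) b) := by ring
        _ ≤ hh w L (a+1) * hh w (L+1) b + w L * (hh w (L+1) a * hh w (L+1) b) := by gcongr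
        _ = _ := by ring
    intro e
    induction e with
    | zero => intro a b _; simp
    | succ e ihe =>
      intro a b hab
      rcases hab.eq_or_lt with rfl | hlt
      · rw [mul_comm]
      · have h1 := S a (b+e) (by omega)
        have h2 := ihe (a+1) b hlt
        rw [show a + 1 + e = a + (e+1) by omega] at h2
        exact h1.trans h2

lemma pair_aux (B : ℕ → A) (nn : ∀ n, 0 ≤ B n) (mono : Monotone B) (lc : LC B)
    (i j l r R ρ N h a1 b1 c1 b2 c2 d1 d2 : ℕ) (hr : 0 < r) (hR : 0 < R) (hρ : 0 < ρ)
    (hrN : r ≤ N) (hRN : R ≤ N) (hρN : ρ ≤ N)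
    (i1 : r * a1 + d1 = i) (j1 : R * b1 + d1 = j) (l1 : ρ * c1 + d1 = l)
    (i2 : r * d1 + d2 = i) (j2 : R * b2 + d2 = j) (l2 : ρ * c2 + d2 = l)
    (hb : d1 ≤ b2) (hc : d1 ≤ c2) (hd : d1 < d2) (hh : N * h ≤ d2 - d1) :
    (r * (d1 + h) ≤ i ∧ R * (d1 + h) ≤ j ∧ ρ * (d1 + h) ≤ l) ∧
    B a1 * B b1 * B c1 * B d1 + B d1 * B b2 * B c2 * B d2 ≤
      B (i - r * d1) * B (j - R * d1) * B (l - ρ * d1) * B d1 +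
      B (i - r * (d1 + h)) * B (j - R * (d1 + h)) * B (l - ρ * (d1 + h)) * B (d1 + h) := by
  have hN1 : r * h ≤ N * h := Nat.mul_le_mul_right _ hrN
  have hN2 : R * h ≤ N * h := Nat.mul_le_mul_right _ hRN
  have hN3 : ρ * h ≤ N * h := Nat.mul_le_mul_right _ hρN
  have b12 : b2 ≤ b1 := by
    by_contra hcon
    have := Nat.mul_le_mul_left R (le_of_lt (not_le.mp hcon)); omega
  have c12 : c2 ≤ c1 := by
    by_contra hcon
    have := Nat.mul_le_mul_left ρ (le_of_lt (not_le.mp hcon)); omega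
  have ad : d1 ≤ a1 := by
    by_contra hcon
    have := Nat.mul_le_mul_left r (le_of_lt (not_le.mp hcon)); omega
  obtain ⟨α, rfl⟩ := Nat.exists_eq_add_of_le ad
  obtain ⟨β, rfl⟩ := Nat.exists_eq_add_of_le (hb.trans b12)
  obtain ⟨γ, rfl⟩ := Nat.exists_eq_add_of_le (hc.trans c12)
  obtain ⟨β', rfl⟩ := Nat.exists_eq_add_of_le hb
  obtain ⟨γ', rfl⟩ := Nat.exists_eq_add_of_le hc
  simp only [mul_add] at *
  have hα : h ≤ α := by
    have : r * h ≤ r * α := by omega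
    exact Nat.le_of_mul_le_mul_left this hr
  obtain ⟨t, rfl⟩ := Nat.exists_eq_add_of_le hα
  simp only [mul_add] at *
  have q1 := Nat.le_mul_of_pos_left (h + t) hr
  have q2 := Nat.le_mul_of_pos_left β hR
  have q3 := Nat.le_mul_of_pos_left γ hρ
  have q4 := Nat.le_mul_of_pos_left β' hR
  have q5 := Nat.le_mul_of_pos_left γ' hρ
  have q6 := Nat.le_mul_of_pos_left t hr
  rw [mul_add] at q1
  refine ⟨⟨by omega, by omega, by omega⟩, ?_⟩
  have e1 : i - r * d1 = d2 := by omega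
  rw [e1]
  have m1 : B (d1 + (h + t)) ≤ B d2 := mono (by omega)
  have m2 : B (d1 + β') * B (d1 + γ') ≤ B (d1 + β) * B (d1 + γ) :=
    mul_le_mul (mono b12) (mono c12) (nn _) (nn _)
  have m3 : B (d1 + β) * B (d1 + γ) ≤ B (j - R * d1) * B (l - ρ * d1) :=
    mul_le_mul (mono (by omega)) (mono (by omega)) (nn _) (nn _)
  have m4 : B (d1 + β') * B (d1 + γ') ≤ B (j - (R * d1 + R * h)) * B (l - (ρ * d1 + ρ * h)) :=
    mul_le_mul (mono (by omega)) (mono (by omega)) (nn _) (nn _)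
  have m5 : B d1 * B (d1 + (h + t)) ≤ B (i - (r * d1 + r * h)) * B (d1 + h) := by
    have := lc h d1 (d1 + t) (by omega)
    calc B d1 * B (d1 + (h + t)) = B d1 * B (d1 + t + h) := by congr 2; omega
      _ ≤ B (d1 + h) * B (d1 + t) := this
      _ ≤ B (d1 + h) * B (i - (r * d1 + r * h)) :=
        mul_le_mul_of_nonneg_left (mono (by omega)) (nn _)
      _ = _ := mul_comm _ _
  have s1 := mul_nonneg (nn d1) (mul_nonneg (sub_nonneg.2 m1) (sub_nonneg.2 m2))
  have s2 := mul_le_mul_of_nonneg_left m3 (mul_nonneg (nn d1) (nn d2))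
  have s3 := mul_le_mul m5 m4 (mul_nonneg (nn _) (nn _)) (mul_nonneg (nn _) (nn _))
  rw [← sub_nonneg] at s2 s3 ⊢
  have := add_nonneg s1 (add_nonneg s2 s3)
  convert this using 1
  ring

lemma single_lo (B : ℕ → A) (nn : ∀ n, 0 ≤ B n) (mono : Monotone B)
    (i j l r R ρ a b c d : ℕ) (hr : 0 < r) (hR : 0 < R) (hρ : 0 < ρ)
    (i1 : r * a + d = i) (j1 : R * b + d = j) (l1 : ρ * c + d = l)
    (ha : d ≤ a) (hb : d ≤ b) (hc : d ≤ c) :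
    (r * d ≤ i ∧ R * d ≤ j ∧ ρ * d ≤ l) ∧
    B a * B b * B c * B d ≤ B (i - r * d) * B (j - R * d) * B (l - ρ * d) * B d := by
  obtain ⟨α, rfl⟩ := Nat.exists_eq_add_of_le ha
  obtain ⟨β, rfl⟩ := Nat.exists_eq_add_of_le hb
  obtain ⟨γ, rfl⟩ := Nat.exists_eq_add_of_le hc
  simp only [mul_add] at *
  have q1 := Nat.le_mul_of_pos_left α hr
  have q2 := Nat.le_mul_of_pos_left β hR
  have q3 := Nat.le_mul_of_pos_left γ hρ
  refine ⟨⟨by omega, by omega, by omega⟩, ?_⟩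
  have h1 : B (d + α) ≤ B (i - r * d) := mono (by omega)
  have h2 : B (d + β) ≤ B (j - R * d) := mono (by omega)
  have h3 : B (d + γ) ≤ B (l - ρ * d) := mono (by omega)
  exact mul_le_mul_of_nonneg_right (mul_le_mul (mul_le_mul h1 h2 (nn _) (nn _)) h3 (nn _)
    (mul_nonneg (nn _) (nn _))) (nn _)

lemma single_hi (B : ℕ → A) (nn : ∀ n, 0 ≤ B n) (mono : Monotone B)
    (i j l r R ρ a b c d : ℕ) (_hr : 0 < r) (hR : 0 < R) (hρ : 0 < ρ)
    (i1 : r * a + d = i) (j1 : R * b + d = j) (l1 : ρ * c + d = l)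
    (ha : a ≤ d) (hb : a ≤ b) (hc : a ≤ c) :
    (r * a ≤ i ∧ R * a ≤ j ∧ ρ * a ≤ l) ∧
    B a * B b * B c * B d ≤ B (i - r * a) * B (j - R * a) * B (l - ρ * a) * B a := by
  obtain ⟨β, rfl⟩ := Nat.exists_eq_add_of_le hb
  obtain ⟨γ, rfl⟩ := Nat.exists_eq_add_of_le hc
  simp only [mul_add] at *
  have q2 := Nat.le_mul_of_pos_left β hR
  have q3 := Nat.le_mul_of_pos_left γ hρ
  refine ⟨⟨by omega, by omega, by omega⟩, ?_⟩
  have e1 : i - r * a = d := by omega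
  have h2 : B (a + β) ≤ B (j - R * a) := mono (by omega)
  have h3 : B (a + γ) ≤ B (l - ρ * a) := mono (by omega)
  rw [e1]
  calc _ = B d * B (a + β) * B (a + γ) * B a := by ring
    _ ≤ _ := mul_le_mul_of_nonneg_right (mul_le_mul (mul_le_mul le_rfl h2 (nn _) (nn _)) h3 (nn _)
      (mul_nonneg (nn _) (nn _))) (nn _)

end ord

lemma matching (μ : ℕ → ℕ) (N : ℕ) (hN : 0 < N) (D : Finset ℕ) :
    (∀ d ∈ D, ∀ e ∈ D, d < e → μ e < μ d) → (∀ d ∈ D, ∀ e ∈ D, d ≡ e [MOD N]) →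
    ∃ f : ℕ → ℕ, Set.InjOn f D ∧ ∀ d ∈ D, (d ≤ μ d → f d = d) ∧
      (μ d < d → μ d ∉ D → f d = μ d) ∧
      (μ d < d → ∃ h, f d = μ d + h ∧ N * h ≤ d - μ d) := by
  induction D using Finset.induction_on_max with
  | empty => intro _ _; exact ⟨id, by simp, by simp⟩
  | insert d D hmax ih =>
    intro hanti hmod
    obtain ⟨f, finj, hf⟩ := ih
      (fun a ha b hb => hanti a (Finset.mem_insert_of_mem ha) b (Finset.mem_insert_of_mem hb))
      (fun a ha b hb => hmod a (Finset.mem_insert_of_mem ha) b (Finset.mem_insert_of_mem hb))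
    have hdD : d ∉ D := fun h => lt_irrefl _ (hmax d h)
    have hμ : ∀ e ∈ D, μ d < μ e := fun e he =>
      hanti e (Finset.mem_insert_of_mem he) d (Finset.mem_insert_self _ _) (hmax e he)
    obtain ⟨v, hv, hv1, hv2, hv3⟩ : ∃ v, v ∉ D.image f ∧ (d ≤ μ d → v = d) ∧
        (μ d < d → μ d ∉ D → v = μ d) ∧ (μ d < d → ∃ h, v = μ d + h ∧ N * h ≤ d - μ d) := by
      rcases le_or_gt d (μ d) with hd | hd
      · refine ⟨d, ?_, fun _ => rfl, fun h => by omega, fun h => by omega⟩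
        intro hmem
        obtain ⟨e, he, hfe⟩ := Finset.mem_image.1 hmem
        have h1 := hmax e he
        have h2 := hμ e he
        have := (hf e he).1 (by omega)
        omega
      · by_cases hp : μ d ∈ D
        · let I := Finset.Icc (μ d) (μ d + (d - μ d) / N)
          have hcard : ((D.image f) ∩ I).card < I.card := by
            have hsub : (D.image f) ∩ I ⊆ (D.filter (fun e => μ d ≤ e)).image f := by
              intro v hv
              rw [Finset.mem_inter, Finset.mem_image] at hv
              obtain ⟨⟨e, he, rfl⟩, hI⟩ := hv
              refine Finset.mem_image.2 ⟨e, Finset.mem_filter.2 ⟨he, ?_⟩, rfl⟩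
              by_contra hcon
              have h2 := hμ e he
              have := (hf e he).1 (by omega)
              have h3 := (Finset.mem_Icc.1 hI).1
              omega
            have h2 : (D.filter (fun e => μ d ≤ e)).card ≤ (Finset.range ((d - μ d) / N)).card := by
              have hk : ∀ e ∈ D, ∃ k, d = e + N * k ∧ 0 < k := by
                intro e he
                have h1 := hmod e (Finset.mem_insert_of_mem he) d (Finset.mem_insert_self _ _)
                have h2 := hmax e he
                obtain ⟨k, hk⟩ := (Nat.modEq_iff_dvd' h2.le).1 h1
                refine ⟨k, by omega, Nat.pos_of_ne_zero ?_⟩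
                rintro rfl
                simp at hk
                omega
              refine Finset.card_le_card_of_injOn (fun e => (d - e) / N - 1) ?_ ?_
              · intro e he
                obtain ⟨he, hle⟩ := Finset.mem_filter.1 he
                obtain ⟨k, hk, hk0⟩ := hk e he
                have : (d - e) / N = k := by
                  rw [show d - e = N * k by omega, Nat.mul_div_cancel_left _ hN]
                have h3 : k ≤ (d - μ d) / N := by
                  rw [Nat.le_div_iff_mul_le hN, mul_comm]; omega
                simp only [Finset.coe_range, Set.mem_Iio]
                omega
              · intro e he e' he' heq
                obtain ⟨he, hle⟩ := Finset.mem_filter.1 he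
                obtain ⟨k, hk1, hk0⟩ := hk e he
                have h1 : (d - e) / N = k := by
                  rw [show d - e = N * k by omega, Nat.mul_div_cancel_left _ hN]
                obtain ⟨he', hle'⟩ := Finset.mem_filter.1 he'
                obtain ⟨k', hk1', hk0'⟩ := hk e' he'
                have h1' : (d - e') / N = k' := by
                  rw [show d - e' = N * k' by omega, Nat.mul_div_cancel_left _ hN]
                simp only at heq
                have : k = k' := by omega
                subst this
                omega
            calc _ ≤ _ := Finset.card_le_card hsub
              _ ≤ _ := Finset.card_image_le
              _ ≤ _ := h2
              _ < _ := by simp only [Finset.card_range, I, Nat.card_Icc]; omega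
          obtain ⟨v, hvI, hv⟩ := Finset.exists_mem_notMem_of_card_lt_card hcard
          refine ⟨v, fun h => hv (Finset.mem_inter.2 ⟨h, hvI⟩), fun h => by omega,
            fun _ h => absurd hp h, fun _ => ⟨v - μ d, ?_, ?_⟩⟩
          · have := (Finset.mem_Icc.1 hvI).1; omega
          · have := (Finset.mem_Icc.1 hvI).2
            have h3 : v - μ d ≤ (d - μ d) / N := Nat.sub_le_iff_le_add'.2 this
            rw [Nat.le_div_iff_mul_le hN] at h3
            rw [mul_comm]; exact h3
        · refine ⟨μ d, ?_, fun h => by omega, fun _ _ => rfl, fun _ => ⟨0, rfl, by simp⟩⟩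
          intro hmem
          obtain ⟨e, he, hfe⟩ := Finset.mem_image.1 hmem
          have h2 := hμ e he
          rcases le_or_gt e (μ e) with h | h
          · have := (hf e he).1 h
            exact hp (by rw [← hfe, this]; exact he)
          · obtain ⟨t, ht, _⟩ := (hf e he).2.2 h
            omega
    refine ⟨Function.update f d v, ?_, ?_⟩
    · have key : ∀ e ∈ D, Function.update f d v e = f e := fun e he =>
        Function.update_of_ne (ne_of_lt (hmax e he)) _ _
      intro a ha b hb hab
      rw [Finset.mem_coe, Finset.mem_insert] at ha hb
      rcases ha with rfl | ha <;> rcases hb with rfl | hb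
      · rfl
      · rw [key b hb, Function.update_self] at hab
        exact absurd (Finset.mem_image.2 ⟨b, hb, hab.symm⟩) hv
      · rw [key a ha, Function.update_self] at hab
        exact absurd (Finset.mem_image.2 ⟨a, ha, hab⟩) hv
      · rw [key a ha, key b hb] at hab
        exact finj ha hb hab
    · intro e he
      rcases Finset.mem_insert.1 he with rfl | he
      · rw [Function.update_self]
        exact ⟨hv1, fun h h' => hv2 h (fun h'' => h' (Finset.mem_insert_of_mem h'')), hv3⟩
      · rw [Function.update_of_ne (ne_of_lt (hmax e he))]
        exact ⟨(hf e he).1, fun h h' => (hf e he).2.1 h (fun h'' => h' (Finset.mem_insert_of_mem h'')),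
          (hf e he).2.2⟩

section ord2
variable {A : Type*} [CommRing A] [PartialOrder A] [IsOrderedRing A]

lemma sum_core (P T : ℕ → A) (μ : ℕ → ℕ) (N : ℕ) (hN : 0 < N) (D K : Finset ℕ)
    (hT : ∀ k, 0 ≤ T k)
    (hanti : ∀ d ∈ D, ∀ e ∈ D, d < e → μ e < μ d) (hmod : ∀ d ∈ D, ∀ e ∈ D, d ≡ e [MOD N])
    (F1 : ∀ d ∈ D, d ≤ μ d → d ∈ K ∧ P d ≤ T d)
    (F2 : ∀ d ∈ D, μ d < d → μ d ∈ K ∧ P d ≤ T (μ d))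
    (F3 : ∀ d ∈ D, μ d < d → μ d ∈ D → ∀ h, N * h ≤ d - μ d → μ d + h ∈ K ∧
      P (μ d) + P d ≤ T (μ d) + T (μ d + h)) :
    ∑ d ∈ D, P d ≤ ∑ k ∈ K, T k := by
  obtain ⟨f, finj, hf⟩ := matching μ N hN D hanti hmod
  have fK : ∀ d ∈ D, f d ∈ K := by
    intro d hd
    rcases le_or_gt d (μ d) with h | h
    · rw [(hf d hd).1 h]; exact (F1 d hd h).1
    · by_cases hp : μ d ∈ D
      · obtain ⟨t, ht, ht'⟩ := (hf d hd).2.2 h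
        rw [ht]; exact (F3 d hd h hp t ht').1
      · rw [(hf d hd).2.1 h hp]; exact (F2 d hd h).1
  have s1 : ∑ d ∈ D, T (f d) ≤ ∑ k ∈ K, T k := by
    rw [← Finset.sum_image (f := T) (g := f) finj]
    refine Finset.sum_le_sum_of_subset_of_nonneg ?_ (fun _ _ _ => hT _)
    intro v hv
    obtain ⟨d, hd, rfl⟩ := Finset.mem_image.1 hv
    exact fK d hd
  refine le_trans ?_ s1
  rw [← Finset.sum_filter_add_sum_filter_not D (fun d => d ≤ μ d) P,
    ← Finset.sum_filter_add_sum_filter_not D (fun d => d ≤ μ d) (fun d => T (f d))]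
  set Lo := D.filter (fun d => d ≤ μ d) with hLo
  set Hi := D.filter (fun d => ¬ d ≤ μ d) with hHi
  have a1 : ∑ d ∈ Lo, T (f d) = ∑ d ∈ Lo, T d := by
    refine Finset.sum_congr rfl fun d hd => ?_
    obtain ⟨h1, h2⟩ := Finset.mem_filter.1 hd
    rw [(hf d h1).1 h2]
  have a2 : ∑ d ∈ Hi, P d ≤ ∑ d ∈ Hi, (T (f d) + if μ d ∈ D then T (μ d) - P (μ d) else 0) := by
    refine Finset.sum_le_sum fun d hd => ?_
    obtain ⟨h1, h2⟩ := Finset.mem_filter.1 hd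
    rw [not_le] at h2
    split_ifs with hp
    · obtain ⟨t, ht, ht'⟩ := (hf d h1).2.2 h2
      have := (F3 d h1 h2 hp t ht').2
      rw [ht]
      rw [← sub_nonneg] at this ⊢
      convert this using 1
      ring
    · rw [(hf d h1).2.1 h2 hp, add_zero]
      exact (F2 d h1 h2).2
  have a3 : ∑ d ∈ Hi, (if μ d ∈ D then T (μ d) - P (μ d) else 0) ≤ ∑ d ∈ Lo, (T d - P d) := by
    rw [← Finset.sum_filter]
    have inj : Set.InjOn μ (Hi.filter (fun d => μ d ∈ D)) := by
      intro a ha b hb hab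
      have ha' := (Finset.mem_filter.1 (Finset.mem_filter.1 ha).1).1
      have hb' := (Finset.mem_filter.1 (Finset.mem_filter.1 hb).1).1
      rcases lt_trichotomy a b with h | h | h
      · have := hanti a ha' b hb' h; omega
      · exact h
      · have := hanti b hb' a ha' h; omega
    rw [← Finset.sum_image (f := fun d => T d - P d) (g := μ) inj]
    refine Finset.sum_le_sum_of_subset_of_nonneg ?_ ?_
    · intro v hv
      obtain ⟨d, hd, rfl⟩ := Finset.mem_image.1 hv
      obtain ⟨h1, h2⟩ := Finset.mem_filter.1 hd
      obtain ⟨h3, h4⟩ := Finset.mem_filter.1 h1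
      rw [not_le] at h4
      have := hanti _ h2 _ h3 h4
      exact Finset.mem_filter.2 ⟨h2, by omega⟩
    · intro d hd _
      obtain ⟨h1, h2⟩ := Finset.mem_filter.1 hd
      exact sub_nonneg.2 (F1 d h1 h2).2
  rw [Finset.sum_add_distrib] at a2
  rw [Finset.sum_sub_distrib] at a3
  rw [a1]
  rw [← sub_nonneg] at a2 a3 ⊢
  convert add_nonneg a2 a3 using 1
  ring

/-- index sets -/
def DD (r R ρ i j l : ℕ) : Finset ℕ := (Finset.range (i + 1)).filter
  (fun d => d ≤ i ∧ d ≤ j ∧ d ≤ l ∧ r ∣ i - d ∧ R ∣ j - d ∧ ρ ∣ l - d)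
def KK (r R ρ i j l : ℕ) : Finset ℕ := (Finset.range (i + 1)).filter
  (fun k => r * k ≤ i ∧ R * k ≤ j ∧ ρ * k ≤ l)

lemma mem_KK {r R ρ i j l k : ℕ} (hr : 0 < r) (h : r * k ≤ i ∧ R * k ≤ j ∧ ρ * k ≤ l) :
    k ∈ KK r R ρ i j l := by
  refine Finset.mem_filter.2 ⟨Finset.mem_range.2 ?_, h⟩
  have := Nat.le_mul_of_pos_left k hr
  omega

lemma fiber (B : ℕ → A) (nn : ∀ n, 0 ≤ B n) (mono : Monotone B) (lc : LC B)
    (r R ρ i j l : ℕ) (hr : 0 < r) (hR : 0 < R) (hρ : 0 < ρ) :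
    ∑ d ∈ DD r R ρ i j l, B ((i - d) / r) * B ((j - d) / R) * B ((l - d) / ρ) * B d ≤
    ∑ k ∈ KK r R ρ i j l, B (i - r * k) * B (j - R * k) * B (l - ρ * k) * B k := by
  have hD : ∀ d ∈ DD r R ρ i j l, r * ((i - d) / r) + d = i ∧ R * ((j - d) / R) + d = j ∧
      ρ * ((l - d) / ρ) + d = l := by
    intro d hd
    obtain ⟨-, h1, h2, h3, h4, h5, h6⟩ := Finset.mem_filter.1 hd
    rw [Nat.mul_div_cancel' h4, Nat.mul_div_cancel' h5, Nat.mul_div_cancel' h6]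
    omega
  have dec : ∀ s a b d e v : ℕ, s * a + d = v → s * b + e = v → d < e → b < a := by
    intro s a b d e v h1 h2 h3
    by_contra hcon
    have := Nat.mul_le_mul_left s (not_lt.1 hcon)
    omega
  have md : ∀ s a b d e v : ℕ, s * a + d = v → s * b + e = v → d ≡ e [MOD s] := by
    intro s a b d e v h1 h2
    have h := h1.trans h2.symm
    have h3 := congrArg (· % s) h
    simpa [Nat.ModEq, Nat.add_mod] using h3
  refine sum_core _ _ (fun d => min ((i - d) / r) (min ((j - d) / R) ((l - d) / ρ)))
    (max r (max R ρ)) (by omega) _ _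
    (fun k => mul_nonneg (mul_nonneg (mul_nonneg (nn _) (nn _)) (nn _)) (nn _)) ?_ ?_ ?_ ?_ ?_
  · intro d hd e he hde
    obtain ⟨h1, h2, h3⟩ := hD d hd
    obtain ⟨h1', h2', h3'⟩ := hD e he
    have := dec _ _ _ _ _ _ h1 h1' hde
    have := dec _ _ _ _ _ _ h2 h2' hde
    have := dec _ _ _ _ _ _ h3 h3' hde
    omega
  · intro d hd e he
    obtain ⟨h1, h2, h3⟩ := hD d hd
    obtain ⟨h1', h2', h3'⟩ := hD e he
    have : max r (max R ρ) = r ∨ max r (max R ρ) = R ∨ max r (max R ρ) = ρ := by omega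
    rcases this with h | h | h <;> rw [h]
    · exact md _ _ _ _ _ _ h1 h1'
    · exact md _ _ _ _ _ _ h2 h2'
    · exact md _ _ _ _ _ _ h3 h3'
  · intro d hd hle
    obtain ⟨h1, h2, h3⟩ := hD d hd
    simp only [le_min_iff] at hle
    obtain ⟨k1, k2⟩ := single_lo B nn mono i j l r R ρ _ _ _ d hr hR hρ h1 h2 h3 hle.1 hle.2.1 hle.2.2
    exact ⟨mem_KK hr k1, k2⟩
  · intro d hd hlt
    obtain ⟨h1, h2, h3⟩ := hD d hd
    generalize (i - d) / r = a at *
    generalize (j - d) / R = b at *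
    generalize (l - d) / ρ = c at *
    have : (min a (min b c) = a ∧ a ≤ b ∧ a ≤ c) ∨ (min a (min b c) = b ∧ b ≤ a ∧ b ≤ c) ∨
      (min a (min b c) = c ∧ c ≤ a ∧ c ≤ b) := by omega
    rcases this with ⟨h, u, v⟩ | ⟨h, u, v⟩ | ⟨h, u, v⟩ <;> rw [h] at hlt ⊢
    · obtain ⟨k1, k2⟩ := single_hi B nn mono i j l r R ρ a b c d hr hR hρ h1 h2 h3 hlt.le u v
      exact ⟨mem_KK hr k1, k2⟩
    · obtain ⟨k1, k2⟩ := single_hi B nn mono j i l R r ρ b a c d hR hr hρ h2 h1 h3 hlt.le u v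
      refine ⟨mem_KK hr ⟨k1.2.1, k1.1, k1.2.2⟩, ?_⟩
      convert k2 using 1 <;> ring
    · obtain ⟨k1, k2⟩ := single_hi B nn mono l i j ρ r R c a b d hρ hr hR h3 h1 h2 hlt.le u v
      refine ⟨mem_KK hr ⟨k1.2.1, k1.2.2, k1.1⟩, ?_⟩
      convert k2 using 1 <;> ring
  · intro d hd hlt hmem t ht
    obtain ⟨h1, h2, h3⟩ := hD d hd
    obtain ⟨g1, g2, g3⟩ := hD _ hmem
    generalize (i - d) / r = a at *
    generalize (j - d) / R = b at *
    generalize (l - d) / ρ = c at *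
    have hr' : r ≤ max r (max R ρ) := by omega
    have hR' : R ≤ max r (max R ρ) := by omega
    have hρ' : ρ ≤ max r (max R ρ) := by omega
    generalize max r (max R ρ) = N at *
    have : (min a (min b c) = a ∧ a ≤ b ∧ a ≤ c) ∨ (min a (min b c) = b ∧ b ≤ a ∧ b ≤ c) ∨
      (min a (min b c) = c ∧ c ≤ a ∧ c ≤ b) := by omega
    generalize min a (min b c) = d1 at *
    generalize (i - d1) / r = a1 at *
    generalize (j - d1) / R = b1 at *
    generalize (l - d1) / ρ = c1 at *
    rcases this with ⟨rfl, u, v⟩ | ⟨rfl, u, v⟩ | ⟨rfl, u, v⟩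
    · obtain ⟨k1, k2⟩ := pair_aux B nn mono lc i j l r R ρ N t a1 b1 c1 b c d1 d hr hR hρ hr' hR' hρ'
        g1 g2 g3 h1 h2 h3 u v hlt ht
      exact ⟨mem_KK hr k1, k2⟩
    · obtain ⟨k1, k2⟩ := pair_aux B nn mono lc j i l R r ρ N t b1 a1 c1 a c d1 d hR hr hρ hR' hr' hρ'
        g2 g1 g3 h2 h1 h3 u v hlt ht
      refine ⟨mem_KK hr ⟨k1.2.1, k1.1, k1.2.2⟩, ?_⟩
      convert k2 using 1 <;> ring
    · obtain ⟨k1, k2⟩ := pair_aux B nn mono lc l i j ρ r R N t c1 a1 b1 a b d1 d hρ hr hR hρ' hr' hR'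
        g3 g1 g2 h3 h1 h2 u v hlt ht
      refine ⟨mem_KK hr ⟨k1.2.1, k1.2.2, k1.1⟩, ?_⟩
      convert k2 using 1 <;> ring

lemma sum_le_inj {ι κ : Type*} [DecidableEq κ] (S : Finset ι) (S' : Finset κ) (g : ι → κ)
    (f : ι → A) (f' : κ → A)
    (hg : Set.InjOn g S) (hm : ∀ s ∈ S, g s ∈ S') (he : ∀ s ∈ S, f s = f' (g s))
    (h0 : ∀ t ∈ S', 0 ≤ f' t) : ∑ s ∈ S, f s ≤ ∑ t ∈ S', f' t := by
  rw [Finset.sum_congr rfl he, ← Finset.sum_image (f := f') hg]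
  refine Finset.sum_le_sum_of_subset_of_nonneg ?_ (fun t ht _ => h0 t ht)
  intro v hv
  obtain ⟨d, hd, rfl⟩ := Finset.mem_image.1 hv
  exact hm d hd

/-- truncated series -/
def SS (B : ℕ → A) (u : A) (N : ℕ) : A := ∑ a ∈ Finset.range (N + 1), u ^ a * B a

lemma SS_four (B : ℕ → A) (u v w t : A) (N : ℕ) :
    SS B u N * (SS B v N * (SS B w N * SS B t N)) =
    ∑ p ∈ (Finset.range (N+1)) ×ˢ ((Finset.range (N+1)) ×ˢ ((Finset.range (N+1)) ×ˢ (Finset.range (N+1)))),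
      (u ^ p.1 * v ^ p.2.1 * w ^ p.2.2.1 * t ^ p.2.2.2) *
        (B p.1 * B p.2.1 * B p.2.2.1 * B p.2.2.2) := by
  unfold SS
  rw [Finset.sum_mul_sum, Finset.sum_mul_sum, Finset.sum_mul_sum, Finset.sum_product]
  simp only [Finset.sum_product, Finset.mul_sum, Finset.sum_mul]
  refine Finset.sum_congr rfl fun a _ => Finset.sum_congr rfl fun b _ =>
    Finset.sum_congr rfl fun c _ => Finset.sum_congr rfl fun d _ => ?_
  ring

lemma trunc_le (B : ℕ → A) (nn : ∀ n, 0 ≤ B n) (mono : Monotone B) (lc : LC B)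
    (r R ρ N : ℕ) (hr : 0 < r) (hR : 0 < R) (hρ : 0 < ρ) (u v w : A)
    (hu : 0 ≤ u) (hv : 0 ≤ v) (hw : 0 ≤ w) :
    SS B (u ^ r) N * (SS B (v ^ R) N * (SS B (w ^ ρ) N * SS B (u * v * w) N)) ≤
    SS B u ((r + R + ρ + 1) * N) * (SS B v ((r + R + ρ + 1) * N) *
      (SS B w ((r + R + ρ + 1) * N) * SS B (u ^ r * v ^ R * w ^ ρ) ((r + R + ρ + 1) * N))) := by
  rw [SS_four, SS_four]
  set M := (r + R + ρ + 1) * N with hM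
  let box := (Finset.range (M+1)) ×ˢ ((Finset.range (M+1)) ×ˢ (Finset.range (M+1)))
  let S1 : Finset ((_ : ℕ × ℕ × ℕ) × ℕ) := box.sigma (fun p => DD r R ρ p.1 p.2.1 p.2.2)
  let S2 : Finset ((_ : ℕ × ℕ × ℕ) × ℕ) := box.sigma (fun p => KK r R ρ p.1 p.2.1 p.2.2)
  have n4 : ∀ a b c d, 0 ≤ B a * B b * B c * B d := fun a b c d =>
    mul_nonneg (mul_nonneg (mul_nonneg (nn _) (nn _)) (nn _)) (nn _)
  have n3 : ∀ a b c, 0 ≤ u ^ a * v ^ b * w ^ c := fun a b c =>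
    mul_nonneg (mul_nonneg (pow_nonneg hu _) (pow_nonneg hv _)) (pow_nonneg hw _)
  calc _ ≤ ∑ s ∈ S1, (u ^ s.1.1 * v ^ s.1.2.1 * w ^ s.1.2.2) *
          (B ((s.1.1 - s.2) / r) * B ((s.1.2.1 - s.2) / R) * B ((s.1.2.2 - s.2) / ρ) * B s.2) := by
        refine sum_le_inj _ _ (fun p => ⟨(r * p.1 + p.2.2.2, R * p.2.1 + p.2.2.2,
          ρ * p.2.2.1 + p.2.2.2), p.2.2.2⟩) _ _ ?_ ?_ ?_ (fun _ _ => mul_nonneg (n3 _ _ _) (n4 _ _ _ _))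
        · rintro ⟨a, b, c, d⟩ _ ⟨a', b', c', d'⟩ _ h
          simp only [Sigma.mk.injEq, Prod.mk.injEq, heq_eq_eq] at h
          obtain ⟨⟨h1, h2, h3⟩, rfl⟩ := h
          have h1' := Nat.eq_of_mul_eq_mul_left hr (Nat.add_right_cancel h1)
          have h2' := Nat.eq_of_mul_eq_mul_left hR (Nat.add_right_cancel h2)
          have h3' := Nat.eq_of_mul_eq_mul_left hρ (Nat.add_right_cancel h3)
          rw [h1', h2', h3']
        · rintro ⟨a, b, c, d⟩ h
          simp only [Finset.mem_product, Finset.mem_range] at h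
          obtain ⟨h1, h2, h3, h4⟩ := h
          have e1 := Nat.mul_le_mul_left r (Nat.lt_succ_iff.1 h1)
          have e2 := Nat.mul_le_mul_left R (Nat.lt_succ_iff.1 h2)
          have e3 := Nat.mul_le_mul_left ρ (Nat.lt_succ_iff.1 h3)
          simp only [add_mul, one_mul] at hM
          simp only [S1, box, Finset.mem_sigma, Finset.mem_product, Finset.mem_range, DD,
            Finset.mem_filter, Nat.add_sub_cancel, dvd_mul_right, and_true]
          omega
        · rintro ⟨a, b, c, d⟩ _
          simp only [Nat.add_sub_cancel]
          rw [Nat.mul_div_cancel_left _ hr, Nat.mul_div_cancel_left _ hR, Nat.mul_div_cancel_left _ hρ]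
          ring
    _ ≤ ∑ s ∈ S2, (u ^ s.1.1 * v ^ s.1.2.1 * w ^ s.1.2.2) *
          (B (s.1.1 - r * s.2) * B (s.1.2.1 - R * s.2) * B (s.1.2.2 - ρ * s.2) * B s.2) := by
        rw [Finset.sum_sigma, Finset.sum_sigma]
        refine Finset.sum_le_sum fun p _ => ?_
        simp only
        rw [← Finset.mul_sum, ← Finset.mul_sum]
        exact mul_le_mul_of_nonneg_left (fiber B nn mono lc r R ρ _ _ _ hr hR hρ) (n3 _ _ _)
    _ ≤ _ := by
        refine sum_le_inj _ _ (fun s => (s.1.1 - r * s.2, s.1.2.1 - R * s.2, s.1.2.2 - ρ * s.2, s.2))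
          _ _ ?_ ?_ ?_ ?_
        · rintro ⟨⟨i, j, l⟩, k⟩ h ⟨⟨i', j', l'⟩, k'⟩ h' heq
          simp only [S2, box, Finset.coe_sigma, Set.mem_sigma_iff, KK, Finset.mem_coe,
            Finset.mem_filter] at h h'
          simp only [Prod.mk.injEq] at heq
          obtain ⟨h1, h2, h3, rfl⟩ := heq
          obtain ⟨_, _, q1, q2, q3⟩ := h
          obtain ⟨_, _, q1', q2', q3'⟩ := h'
          have : i = i' := by omega
          have : j = j' := by omega
          have : l = l' := by omega
          subst_vars
          rfl
        · rintro ⟨⟨i, j, l⟩, k⟩ h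
          simp only [S2, box, Finset.mem_sigma, Finset.mem_product, Finset.mem_range, KK,
            Finset.mem_filter] at h ⊢
          omega
        · rintro ⟨⟨i, j, l⟩, k⟩ h
          simp only [S2, box, Finset.mem_sigma, Finset.mem_product, Finset.mem_range, KK,
            Finset.mem_filter] at h ⊢
          obtain ⟨_, _, q1, q2, q3⟩ := h
          congr 1
          rw [mul_pow, mul_pow, ← pow_mul, ← pow_mul, ← pow_mul]
          nth_rewrite 1 [← Nat.sub_add_cancel q1, ← Nat.sub_add_cancel q2, ← Nat.sub_add_cancel q3]
          simp only [pow_add]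
          ring
        · intro t _
          refine mul_nonneg (mul_nonneg (n3 _ _ _) (pow_nonneg ?_ _)) (n4 _ _ _ _)
          exact n3 _ _ _
end ord2

/-- coefficientwise order -/
@[reducible] def psOrder : PartialOrder (PowerSeries ℚ) where
  le f g := ∀ n, PowerSeries.coeff n f ≤ PowerSeries.coeff n g
  le_refl f n := le_rfl
  le_trans f g h h1 h2 n := (h1 n).trans (h2 n)
  le_antisymm f g h1 h2 := PowerSeries.ext fun n => le_antisymm (h1 n) (h2 n)

attribute [local instance] psOrder

lemma ps_le {f g : PowerSeries ℚ} :
    f ≤ g ↔ ∀ n, PowerSeries.coeff n f ≤ PowerSeries.coeff n g := Iff.rfl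

lemma ps_mul_nonneg {f g : PowerSeries ℚ} (hf : 0 ≤ f) (hg : 0 ≤ g) : 0 ≤ f * g := by
  intro n
  rw [PowerSeries.coeff_mul, map_zero]
  refine Finset.sum_nonneg fun p _ => mul_nonneg ?_ ?_
  · simpa using hf p.1
  · simpa using hg p.2

lemma X_pow_nonneg (k : ℕ) : (0 : PowerSeries ℚ) ≤ PowerSeries.X ^ k := by
  intro n
  rw [PowerSeries.coeff_X_pow]
  split_ifs <;> simp

lemma psOrdered : IsOrderedRing (PowerSeries ℚ) :=
  { add_le_add_left := fun a b h c n => by simpa using h n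
    zero_le_one := by simpa using X_pow_nonneg 0
    mul_le_mul_of_nonneg_left := fun a ha b c h => by
      have h1 : (0 : PowerSeries ℚ) ≤ c - b := fun n => by simpa using h n
      have := ps_mul_nonneg ha h1
      intro n
      have := this n
      rw [mul_sub] at this
      simpa using this
    mul_le_mul_of_nonneg_right := fun a ha b c h => by
      have h1 : (0 : PowerSeries ℚ) ≤ c - b := fun n => by simpa using h n
      have := ps_mul_nonneg ha h1
      intro n
      have := this n
      rw [mul_comm, sub_mul] at this
      simpa using this }

attribute [local instance] psOrdered

lemma one_sub_const (c : ℕ) (hc : 0 < c) :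
    PowerSeries.constantCoeff (1 - (PowerSeries.X : PowerSeries ℚ) ^ c) = 1 := by
  simp [hc.ne']

lemma trunc_dvd (L m x N : ℕ) (hx : 0 < x) :
    (PowerSeries.X : PowerSeries ℚ) ^ (N + 1) ∣
      (∏ j ∈ Finset.range L, (1 - (PowerSeries.X : PowerSeries ℚ) ^ (x + j * m))) *
        SS (hh (fun j => (PowerSeries.X : PowerSeries ℚ) ^ (j * m)) L) (PowerSeries.X ^ x) N - 1 := by
  obtain ⟨E, hE⟩ := hh_trunc (fun j => (PowerSeries.X : PowerSeries ℚ) ^ (j * m))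
    (PowerSeries.X ^ x) N L
  have : ∀ j, (1 - (PowerSeries.X : PowerSeries ℚ) ^ (x + j * m)) =
      1 - PowerSeries.X ^ (j * m) * PowerSeries.X ^ x := fun j => by rw [pow_add, mul_comm]
  simp only [this, SS]
  rw [hE, add_sub_cancel_left, ← pow_mul]
  exact Dvd.dvd.mul_right (pow_dvd_pow _ (Nat.le_mul_of_pos_left _ hx)) _

lemma dvd_mul_sub_one {A : Type*} [CommRing A] {t a b c d : A} (h1 : t ∣ a * b - 1)
    (h2 : t ∣ c * d - 1) : t ∣ (a * c) * (b * d) - 1 := by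
  have : (a * c) * (b * d) - 1 = (a * b - 1) * (c * d) + (c * d - 1) := by ring
  rw [this]
  exact dvd_add (h1.mul_right _) h2

lemma coeff_inv (L m x y z s N n : ℕ) (hx : 0 < x) (hy : 0 < y) (hz : 0 < z) (hs : 0 < s)
    (hn : n ≤ N) :
    PowerSeries.coeff (R := ℚ) n (∏ j ∈ Finset.range L,
          (1 - (PowerSeries.X : PowerSeries ℚ) ^ (x + j * m)) *
          ((1 - (PowerSeries.X : PowerSeries ℚ) ^ (y + j * m)) *
           ((1 - (PowerSeries.X : PowerSeries ℚ) ^ (z + j * m)) *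
            (1 - (PowerSeries.X : PowerSeries ℚ) ^ (s + j * m)))))⁻¹ =
    PowerSeries.coeff (R := ℚ) n
      (SS (hh (fun j => (PowerSeries.X : PowerSeries ℚ) ^ (j * m)) L) (PowerSeries.X ^ x) N *
      (SS (hh (fun j => (PowerSeries.X : PowerSeries ℚ) ^ (j * m)) L) (PowerSeries.X ^ y) N *
      (SS (hh (fun j => (PowerSeries.X : PowerSeries ℚ) ^ (j * m)) L) (PowerSeries.X ^ z) N *
      SS (hh (fun j => (PowerSeries.X : PowerSeries ℚ) ^ (j * m)) L) (PowerSeries.X ^ s) N))) := by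
  have hd := dvd_mul_sub_one (trunc_dvd L m x N hx) (dvd_mul_sub_one (trunc_dvd L m y N hy)
    (dvd_mul_sub_one (trunc_dvd L m z N hz) (trunc_dvd L m s N hs)))
  rw [← Finset.prod_mul_distrib, ← Finset.prod_mul_distrib, ← Finset.prod_mul_distrib] at hd
  set P := ∏ j ∈ Finset.range L,
          (1 - (PowerSeries.X : PowerSeries ℚ) ^ (x + j * m)) *
          ((1 - (PowerSeries.X : PowerSeries ℚ) ^ (y + j * m)) *
           ((1 - (PowerSeries.X : PowerSeries ℚ) ^ (z + j * m)) *
            (1 - (PowerSeries.X : PowerSeries ℚ) ^ (s + j * m)))) with hP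
  generalize (SS (hh (fun j => (PowerSeries.X : PowerSeries ℚ) ^ (j * m)) L) (PowerSeries.X ^ x) N *
      (SS (hh (fun j => (PowerSeries.X : PowerSeries ℚ) ^ (j * m)) L) (PowerSeries.X ^ y) N *
      (SS (hh (fun j => (PowerSeries.X : PowerSeries ℚ) ^ (j * m)) L) (PowerSeries.X ^ z) N *
      SS (hh (fun j => (PowerSeries.X : PowerSeries ℚ) ^ (j * m)) L) (PowerSeries.X ^ s) N))) = S at *
  have hc : PowerSeries.constantCoeff P ≠ 0 := by
    have : PowerSeries.constantCoeff P = 1 := by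
      rw [hP, map_prod]
      refine Finset.prod_eq_one fun j _ => ?_
      rw [map_mul, map_mul, map_mul, one_sub_const _ (by omega), one_sub_const _ (by omega),
        one_sub_const _ (by omega), one_sub_const _ (by omega)]
      norm_num
    rw [this]; norm_num
  have e : P⁻¹ * (P * S - 1) = S - P⁻¹ := by
    rw [mul_sub, ← mul_assoc, PowerSeries.inv_mul_cancel _ hc]; ring
  have h2 := hd.mul_left P⁻¹
  rw [e, PowerSeries.X_pow_dvd_iff] at h2
  have := h2 n (by omega)
  rw [map_sub, sub_eq_zero] at this
  exact this.symm

lemma main_le (L m x y z r R ρ N : ℕ) (hL : 0 < L) (hr : 0 < r) (hR : 0 < R) (hρ : 0 < ρ) :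
    let B := hh (fun j => (PowerSeries.X : PowerSeries ℚ) ^ (j * m)) L
    SS B (PowerSeries.X ^ (r * x)) N * (SS B (PowerSeries.X ^ (R * y)) N *
      (SS B (PowerSeries.X ^ (ρ * z)) N * SS B (PowerSeries.X ^ (x + y + z)) N)) ≤
    SS B (PowerSeries.X ^ x) ((r + R + ρ + 1) * N) * (SS B (PowerSeries.X ^ y) ((r + R + ρ + 1) * N) *
      (SS B (PowerSeries.X ^ z) ((r + R + ρ + 1) * N) *
        SS B (PowerSeries.X ^ (r * x + R * y + ρ * z)) ((r + R + ρ + 1) * N))) := by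
  intro B
  have hw : ∀ j : ℕ, (0 : PowerSeries ℚ) ≤ (fun j => (PowerSeries.X : PowerSeries ℚ) ^ (j * m)) j :=
    fun j => X_pow_nonneg _
  have := trunc_le B (hh_nonneg _ hw L) (hh_mono _ hw (by simp) L hL) (hh_lc _ hw L) r R ρ N hr hR hρ
    (PowerSeries.X ^ x) (PowerSeries.X ^ y) (PowerSeries.X ^ z)
    (X_pow_nonneg _) (X_pow_nonneg _) (X_pow_nonneg _)
  simp only [← pow_mul, ← pow_add] at this
  rw [mul_comm r x, mul_comm R y, mul_comm ρ z]
  exact this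

end BG

theorem berkovich_grizzell_octuple (L m x y z r R ρ : ℕ)
    (hL : 0 < L) (hm : 0 < m) (hx : 0 < x) (hy : 0 < y) (hz : 0 < z)
    (hr : 0 < r) (hR : 0 < R) (hρ : 0 < ρ) (n : ℕ) :
    0 ≤ PowerSeries.coeff (R := ℚ) n
      ((∏ j ∈ Finset.range L,
          (1 - (PowerSeries.X : PowerSeries ℚ) ^ (x + j * m)) *
          ((1 - (PowerSeries.X : PowerSeries ℚ) ^ (y + j * m)) *
           ((1 - (PowerSeries.X : PowerSeries ℚ) ^ (z + j * m)) *
            (1 - (PowerSeries.X : PowerSeries ℚ) ^ (r * x + R * y + ρ * z + j * m)))))⁻¹ -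
       (∏ j ∈ Finset.range L,
          (1 - (PowerSeries.X : PowerSeries ℚ) ^ (r * x + j * m)) *
          ((1 - (PowerSeries.X : PowerSeries ℚ) ^ (R * y + j * m)) *
           ((1 - (PowerSeries.X : PowerSeries ℚ) ^ (ρ * z + j * m)) *
            (1 - (PowerSeries.X : PowerSeries ℚ) ^ (x + y + z + j * m)))))⁻¹) := by
  rw [map_sub, sub_nonneg]
  have hN : n ≤ (r + R + ρ + 1) * n := Nat.le_mul_of_pos_left _ (by omega)
  have p1 : 0 < r * x := Nat.mul_pos hr hx
  have p2 : 0 < R * y := Nat.mul_pos hR hy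
  have p3 : 0 < ρ * z := Nat.mul_pos hρ hz
  rw [BG.coeff_inv L m x y z (r * x + R * y + ρ * z) ((r + R + ρ + 1) * n) n hx hy hz (by omega) hN,
    BG.coeff_inv L m (r * x) (R * y) (ρ * z) (x + y + z) n n p1 p2 p3 (by omega) le_rfl]
  exact BG.ps_le.1 (BG.main_le L m x y z r R ρ n hL hr hR hρ) n
end
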